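/- arXiv:2112.04072 — 2 statements merged into one kernel-verified Lean document; each statement's English description precedes it below -/
import Mathlib

section
/- Let G be a finitely generated virtually free group with generating set {s₁,…,sₙ}, and let G' be a group. There exists an existential first-order formula ψ(x₁,…,x₂ₙ) in the language of groups with 2n free variables such that for all group homomorphisms φ, φ' : G → G', the following are equivalent: (1) φ and φ' are equivalent, i.e. φ ∼ φ'; (2) G' satisfies ψ(φ(s₁),…,φ(sₙ),φ'(s₁),…,φ'(sₙ)). -/
open FirstOrder Language

/-- Function symbols of the first-order language of groups:
a binary multiplication, a unary inverse and a constant for the identity. -/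
inductive GroupFunc : ℕ → Type
  | mul : GroupFunc 2
  | inv : GroupFunc 1
  | one : GroupFunc 0

/-- The first-order language of groups. -/
def groupLang : FirstOrder.Language :=
  { Functions := GroupFunc
    Relations := fun _ => Empty }

/-- Every group is a structure for the language of groups in the natural way. -/
instance groupLangStructure (G : Type*) [Group G] : groupLang.Structure G where
  funMap {n} f v :=
    match f with
    | .mul => v 0 * v 1
    | .inv => (v 0)⁻¹
    | .one => 1
  RelMap {n} r _ := r.elim

/-- Existential formulas: iterated existential quantifications of a
quantifier-free formula. -/
inductive IsExistentialQF {α : Type*} : ∀ {n : ℕ}, groupLang.BoundedFormula α n → Prop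
  | of_isQF {n : ℕ} {φ : groupLang.BoundedFormula α n} (h : φ.IsQF) : IsExistentialQF φ
  | ex {n : ℕ} {φ : groupLang.BoundedFormula α (n + 1)} (h : IsExistentialQF φ) :
      IsExistentialQF φ.ex

/-- Universal formulas: iterated universal quantifications of a
quantifier-free formula. -/
inductive IsUniversalQF {α : Type*} : ∀ {n : ℕ}, groupLang.BoundedFormula α n → Prop
  | of_isQF {n : ℕ} {φ : groupLang.BoundedFormula α n} (h : φ.IsQF) : IsUniversalQF φ
  | all {n : ℕ} {φ : groupLang.BoundedFormula α (n + 1)} (h : IsUniversalQF φ) :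
      IsUniversalQF φ.all

/-- ∀∃-formulas: iterated universal quantifications of an existential formula. -/
inductive IsAE {α : Type*} : ∀ {n : ℕ}, groupLang.BoundedFormula α n → Prop
  | of_existential {n : ℕ} {φ : groupLang.BoundedFormula α n} (h : IsExistentialQF φ) : IsAE φ
  | all {n : ℕ} {φ : groupLang.BoundedFormula α (n + 1)} (h : IsAE φ) : IsAE φ.all

/-- A group is virtually free if it has a free subgroup of finite index. -/
def VirtuallyFree (G : Type*) [Group G] : Prop :=
  ∃ H : Subgroup G, H.FiniteIndex ∧ Nonempty (IsFreeGroup H)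

/-- A group is co-Hopfian if every injective endomorphism is surjective. -/
def CoHopfian (G : Type*) [Group G] : Prop :=
  ∀ φ : G →* G, Function.Injective φ → Function.Surjective φ

/-- Two homomorphisms `φ, φ' : G → G'` are equivalent if they coincide up to
conjugation on every finite subgroup of `G`. -/
def HomEquiv {G G' : Type*} [Group G] [Group G'] (φ φ' : G →* G') : Prop :=
  ∀ H : Subgroup G, (H : Set G).Finite →
    ∃ g' : G', ∀ h ∈ H, φ' h = g' * φ h * g'⁻¹

/-- Two groups are ∀∃-equivalent if they satisfy the same ∀∃-sentences. -/
def AEEquivalent (G : Type*) (G' : Type*) [Group G] [Group G'] : Prop :=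
  ∀ φ : groupLang.Sentence, IsAE φ → (G ⊨ φ ↔ G' ⊨ φ)

/-- Two groups are ∃-equivalent if they satisfy the same existential sentences. -/
def ExistentiallyEquivalent (G : Type*) (G' : Type*) [Group G] [Group G'] : Prop :=
  ∀ φ : groupLang.Sentence, IsExistentialQF φ → (G ⊨ φ ↔ G' ⊨ φ)

/-- An endomorphism is rigid-testing: `G` is rigid if every endomorphism
equivalent to the identity is an automorphism. -/
def Rigid (G : Type*) [Group G] : Prop :=
  ∀ φ : G →* G, HomEquiv φ (MonoidHom.id G) → Function.Bijective φ

/-- `Out G` is finite, expressed as: the inner automorphisms form a finite index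
subgroup of `Aut G`. -/
def OutFinite (G : Type*) [Group G] : Prop :=
  (MulAut.conj : G →* MulAut G).range.FiniteIndex

/-- Iterated composition of an endomorphism. -/
def homPow {G : Type*} [Group G] (φ : G →* G) : ℕ → (G →* G)
  | 0 => MonoidHom.id G
  | n + 1 => φ.comp (homPow φ n)

/-- An endomorphism `φ` of `G` is class-permuting if some positive power of `φ`
is equivalent to the identity of `G`. -/
def ClassPermuting {G : Type*} [Group G] (φ : G →* G) : Prop :=
  ∃ n : ℕ, 1 ≤ n ∧ HomEquiv (homPow φ n) (MonoidHom.id G)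

/-- A maximal finite subgroup: a finite subgroup maximal with respect to
inclusion among finite subgroups. -/
def MaximalFiniteSubgroup {G : Type*} [Group G] (A : Subgroup G) : Prop :=
  (A : Set G).Finite ∧ ∀ B : Subgroup G, (B : Set G).Finite → A ≤ B → A = B

/-- Two subgroups are conjugate. -/
def SubgroupConj {G : Type*} [Group G] (A B : Subgroup G) : Prop :=
  ∃ g : G, B = A.map (MulAut.conj g).toMonoidHom

/-- A group is strongly co-Hopfian if there is a finite subset `F` of
`G \ {1}` such that every endomorphism whose kernel misses `F` is an
automorphism. -/
def StronglyCoHopfian (G : Type*) [Group G] : Prop :=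
  ∃ F : Finset G, (1 : G) ∉ F ∧
    ∀ φ : G →* G, (∀ f ∈ F, φ f ≠ 1) → Function.Bijective φ

/-- A group is finitely presented. -/
def GroupFinitelyPresented (G : Type*) [Group G] : Prop :=
  ∃ (n : ℕ) (rels : Finset (FreeGroup (Fin n))),
    Nonempty (PresentedGroup (rels : Set (FreeGroup (Fin n))) ≃* G)

section VFHelpers

open scoped Pointwise

theorem vf_side_single {α : Type*} [DecidableEq α] (x : α × Bool) (u : FreeGroup α)
    (h : (FreeGroup.mk [x] * u).toWord.getLast? ≠ u.toWord.getLast?) :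
    u = 1 ∨ u = (FreeGroup.mk [x])⁻¹ := by
  have e : (FreeGroup.mk [x] * u).toWord = FreeGroup.reduce (x :: u.toWord) := by
    conv_lhs => rw [← FreeGroup.mk_toWord (x := u), FreeGroup.mul_mk, FreeGroup.toWord_mk]
    rfl
  rw [e, FreeGroup.reduce.cons, FreeGroup.reduce_toWord] at h
  rcases hu : u.toWord with _ | ⟨y, l⟩
  · left; exact FreeGroup.toWord_eq_nil_iff.1 hu
  · right
    rw [hu] at h
    simp only at h
    split_ifs at h with hc
    · rcases l with _ | ⟨z, l⟩
      · rw [← FreeGroup.mk_toWord (x := u), hu, FreeGroup.inv_mk]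
        congr 1
        simp [FreeGroup.invRev, hc.1, hc.2]
      · simp at h
    · simp at h

theorem vf_side_mk {α : Type*} [DecidableEq α] (L : List (α × Bool)) (v : FreeGroup α)
    (h : (FreeGroup.mk L * v).toWord.getLast? ≠ v.toWord.getLast?) :
    ∃ i ≤ L.length, v = (FreeGroup.mk (L.drop i))⁻¹ := by
  induction L with
  | nil => exact absurd (by rw [← FreeGroup.one_eq_mk, one_mul]) h
  | cons x L ih =>
    by_cases h1 : (FreeGroup.mk L * v).toWord.getLast? = v.toWord.getLast?
    · have e : FreeGroup.mk (x :: L) = FreeGroup.mk [x] * FreeGroup.mk L := by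
        rw [FreeGroup.mul_mk]; rfl
      rw [e, mul_assoc, ← h1] at h
      rcases vf_side_single x _ h with h2 | h2
      · exact ⟨1, by simp, by simpa using eq_inv_of_mul_eq_one_right h2⟩
      · refine ⟨0, by simp, ?_⟩
        rw [List.drop_zero, e, mul_inv_rev, ← h2]; group
    · obtain ⟨i, hi, hv⟩ := ih h1
      exact ⟨i + 1, by simpa using hi, by simpa using hv⟩

theorem vf_side_split {α : Type*} [DecidableEq α] (w : FreeGroup α) (k : ℕ) (hk : 1 ≤ k)
    (hk2 : k ≤ w.toWord.length) :
    (FreeGroup.mk (w.toWord.take k)).toWord.getLast? ≠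
      ((FreeGroup.mk (w.toWord.drop k))⁻¹).toWord.getLast? := by
  have hr : FreeGroup.IsReduced w.toWord := FreeGroup.isReduced_toWord
  generalize w.toWord = L at *
  have h1 : FreeGroup.IsReduced (L.take k) := hr.infix (List.take_prefix k L).isInfix
  have h2 : FreeGroup.IsReduced (L.drop k) := hr.infix (List.drop_suffix k L).isInfix
  rw [FreeGroup.toWord_inv, FreeGroup.toWord_mk, FreeGroup.toWord_mk, h1.reduce_eq, h2.reduce_eq]
  rw [FreeGroup.invRev, List.getLast?_reverse, List.head?_map, List.head?_drop,
    List.getLast?_take, if_neg (by omega)]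
  have h3 : L[k-1]? = some L[k-1] := List.getElem?_eq_getElem (by omega)
  rw [h3]
  rcases lt_or_eq_of_le hk2 with hlt | heq
  · rw [List.getElem?_eq_getElem hlt]
    have hc := List.isChain_iff_getElem.1 hr (k-1) (by omega)
    have e : k - 1 + 1 = k := by omega
    simp only [e] at hc
    intro hh
    simp only [Option.map_some, Option.some_or] at hh
    have hh2 := Option.some.inj hh
    simp [hh2] at hc
  · rw [List.getElem?_eq_none (by omega)]
    simp

theorem vf_exists_len {G : Type*} [Group G] (S : Set G) (hS : S.Finite)
    (hcl : Subgroup.closure S = ⊤) :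
    ∃ l : G → ℕ, l 1 = 0 ∧ (∀ g h, l (g * h) ≤ l g + l h) ∧ (∀ g, l g⁻¹ = l g) ∧
      (∀ n, {g | l g ≤ n}.Finite) ∧
      (∀ g n, l g = n + 1 → ∃ a u, g = a * u ∧ l a ≤ 1 ∧ l u = n) := by
  classical
  set T : Set G := S ∪ S⁻¹ ∪ {1} with hT
  have hTf : T.Finite := (hS.union hS.inv).union (Set.finite_singleton 1)
  have h1 : (1 : G) ∈ T := by simp [hT]
  have hTi : T⁻¹ = T := by simp [hT, Set.union_comm]
  have hex : ∀ g : G, ∃ n, g ∈ T ^ n := by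
    intro g
    have hg : g ∈ Subgroup.closure S := by rw [hcl]; trivial
    induction hg using Subgroup.closure_induction with
    | mem x hx => exact ⟨1, by rw [pow_one]; simp [hT, hx]⟩
    | one => exact ⟨0, by simp⟩
    | mul x y _ _ hx hy =>
      obtain ⟨m, hm⟩ := hx
      obtain ⟨n, hn⟩ := hy
      exact ⟨m + n, by rw [pow_add]; exact Set.mul_mem_mul hm hn⟩
    | inv x _ hx =>
      obtain ⟨m, hm⟩ := hx
      refine ⟨m, ?_⟩
      have : x⁻¹ ∈ (T ^ m)⁻¹ := Set.inv_mem_inv.2 hm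
      rwa [← inv_pow, hTi] at this
  have hmono : ∀ {m n : ℕ}, m ≤ n → T ^ m ⊆ T ^ n := fun h => Set.pow_subset_pow_right h1 h
  have hle : ∀ g n, Nat.find (hex g) ≤ n ↔ g ∈ T ^ n := fun g n =>
    ⟨fun h => hmono h (Nat.find_spec (hex g)), fun h => Nat.find_min' _ h⟩
  have hmul : ∀ g h, Nat.find (hex (g * h)) ≤ Nat.find (hex g) + Nat.find (hex h) := by
    intro g h
    rw [hle, pow_add]
    exact Set.mul_mem_mul (Nat.find_spec (hex g)) (Nat.find_spec (hex h))
  have hinv : ∀ g, Nat.find (hex g⁻¹) ≤ Nat.find (hex g) := by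
    intro g
    rw [hle]
    have : g⁻¹ ∈ (T ^ Nat.find (hex g))⁻¹ := Set.inv_mem_inv.2 (Nat.find_spec (hex g))
    rwa [← inv_pow, hTi] at this
  refine ⟨fun g => Nat.find (hex g), ?_, hmul, ?_, ?_, ?_⟩
  · have := (hle 1 0).2 (by simp)
    simpa using this
  · intro g
    refine le_antisymm (hinv g) ?_
    have := hinv g⁻¹
    simpa only [inv_inv] using this
  · intro n
    simp only [hle]
    change (T ^ n).Finite
    induction n with
    | zero => simp
    | succ n ih => rw [pow_succ]; exact ih.mul hTf
  · intro g n hg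
    have hg' := Nat.find_spec (hex g)
    simp only at hg
    rw [hg, pow_succ'] at hg'
    obtain ⟨a, ha, u, hu, rfl⟩ := Set.mem_mul.1 hg'
    have ha1 : Nat.find (hex a) ≤ 1 := (hle a 1).2 (by simpa using ha)
    have hu1 := (hle u n).2 hu
    have := hmul a u
    exact ⟨a, u, rfl, ha1, by show Nat.find (hex u) = n; omega⟩

theorem vf_basis_finite {α : Type*} (h : Group.FG (FreeGroup α)) : Finite α := by
  classical
  obtain ⟨S, hS⟩ := Group.fg_def.1 h
  set A : Finset α := S.biUnion fun g => (g.toWord.map Prod.fst).toFinset with hA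
  let f : FreeGroup α →* Multiplicative ℤ :=
    FreeGroup.lift fun y => if y ∈ A then 1 else Multiplicative.ofAdd 1
  have hf : f = 1 := by
    refine MonoidHom.eq_of_eqOn_dense hS ?_
    intro g hg
    have : ∀ p ∈ g.toWord, p.1 ∈ A := by
      intro p hp
      simp only [hA, Finset.mem_biUnion, List.mem_toFinset, List.mem_map]
      exact ⟨g, hg, p, hp, rfl⟩
    rw [← FreeGroup.mk_toWord (x := g)]
    simp only [f, FreeGroup.lift_mk, MonoidHom.one_apply]
    apply List.prod_eq_one
    intro x hx
    obtain ⟨p, hp, rfl⟩ := List.mem_map.1 hx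
    cases hb : p.2 <;> simp [this p hp]
  refine Finite.of_injective (β := A) (fun x => ⟨x, ?_⟩) (fun x y h => by simpa using h)
  by_contra hx
  have h2 := DFunLike.congr_fun hf (FreeGroup.of x)
  simp [f, hx] at h2

/-- Bottleneck data give a bounded-centre property. -/
theorem vf_center {G : Type*} [Group G] (l : G → ℕ) (D : ℕ)
    (hP : ∀ a b : G, D < l (a * b⁻¹) → ∃ m, ∀ x,
      l (x * m⁻¹) < l (x * a⁻¹) ∨ l (x * m⁻¹) < l (x * b⁻¹))
    (H : Subgroup G) (hH : (H : Set G).Finite) :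
    ∃ c : G, ∀ h ∈ H, l (c * h * c⁻¹) ≤ D := by
  classical
  let R : G → ℕ := fun c => hH.toFinset.sup fun h => l (h * c⁻¹)
  have hR : ∀ c h, h ∈ H → l (h * c⁻¹) ≤ R c := fun c h hh =>
    Finset.le_sup (f := fun h => l (h * c⁻¹)) (by simpa using hh)
  obtain ⟨c, hc⟩ : ∃ c, ∀ d, R c ≤ R d := by
    have := exists_minimalFor_of_wellFoundedLT (fun _ : G => True) R ⟨1, trivial⟩
    obtain ⟨c, -, hc⟩ := this
    refine ⟨c, fun d => ?_⟩
    rcases le_total (R d) (R c) with h | h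
    · exact hc trivial h
    · exact h
  refine ⟨c, fun h hh => ?_⟩
  by_contra hlt
  push Not at hlt
  obtain ⟨m, hm⟩ := hP c (c * h⁻¹) (by simpa [mul_assoc] using hlt)
  have hne : hH.toFinset.Nonempty := ⟨1, by simpa using H.one_mem⟩
  obtain ⟨x, hx, hxe⟩ := Finset.exists_mem_eq_sup _ hne (fun h => l (h * m⁻¹))
  have hx' : x ∈ H := by simpa using hx
  have h0 := hc m
  have e : R m = l (x * m⁻¹) := hxe
  rcases hm x with h1 | h1
  · have := hR c x hx'
    omega
  · have := hR c (x * h) (H.mul_mem hx' hh)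
    rw [mul_inv_rev, inv_inv, ← mul_assoc] at h1
    omega

theorem vf_bottleneck {G α : Type*} [Group G] [DecidableEq α] [Finite α] (j : FreeGroup α →* G)
    (hj : Function.Injective j) (hfi : j.range.FiniteIndex)
    (l : G → ℕ) (hl1 : l 1 = 0) (hmul : ∀ g h, l (g * h) ≤ l g + l h) (hinv : ∀ g, l g⁻¹ = l g)
    (hfin : ∀ n, {g | l g ≤ n}.Finite)
    (hstep : ∀ g n, l g = n + 1 → ∃ a u, g = a * u ∧ l a ≤ 1 ∧ l u = n) :
    ∃ D : ℕ, ∀ a b : G, D < l (a * b⁻¹) → ∃ m, ∀ x,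
      l (x * m⁻¹) < l (x * a⁻¹) ∨ l (x * m⁻¹) < l (x * b⁻¹) := by
  classical
  -- coset representatives
  have hfq : Finite (G ⧸ j.range) := Subgroup.finite_quotient_of_finiteIndex
  have hfq : Finite (G ⧸ j.range) := Subgroup.finite_quotient_of_finiteIndex
  have hfq : Finite (G ⧸ j.range) := Subgroup.finite_quotient_of_finiteIndex
  let t : G → G := fun g => Quotient.out (QuotientGroup.mk g : G ⧸ j.range)
  have htf : (Set.range t).Finite := by
    have : Set.range t ⊆ Set.range (Quotient.out : G ⧸ j.range → G) := by
      rintro _ ⟨g, rfl⟩; exact ⟨_, rfl⟩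
    exact (Set.finite_range (ι := G ⧸ j.range) _).subset this
  have hpi : ∀ g, ∃ f, g = t g * j f := by
    intro g
    have : (t g)⁻¹ * g ∈ j.range := QuotientGroup.eq.1 (Quotient.out_eq _)
    obtain ⟨f, hf⟩ := this
    exact ⟨f, by rw [hf]; group⟩
  choose π hπ using hpi
  -- finite set of cocycles
  have hCf : {c : FreeGroup α | ∃ a g, l a ≤ 1 ∧ π (a * g) = c * π g}.Finite := by
    have h1 : ((Set.range t)⁻¹ * {a | l a ≤ 1} * Set.range t).Finite :=
      (htf.inv.mul (hfin 1)).mul htf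
    refine (h1.preimage (f := j) hj.injOn).subset ?_
    rintro c ⟨a, g, ha, hc⟩
    refine Set.mem_mul.2 ⟨(t (a * g))⁻¹ * a, Set.mul_mem_mul (Set.inv_mem_inv.2 ⟨_, rfl⟩) ha,
      t g, ⟨_, rfl⟩, ?_⟩
    have e1 := hπ (a * g)
    have e2 : t g = g * (j (π g))⁻¹ := eq_mul_inv_of_mul_eq (hπ g).symm
    have e3 : t (a * g) = a * g * (j (π (a * g)))⁻¹ := eq_mul_inv_of_mul_eq e1.symm
    rw [e3, e2, hc, map_mul]; group
  have hPf : (⋃ c ∈ {c : FreeGroup α | ∃ a g, l a ≤ 1 ∧ π (a * g) = c * π g},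
      ⋃ i ∈ Set.Iic c.toWord.length, {(FreeGroup.mk (c.toWord.drop i))⁻¹}).Finite :=
    hCf.biUnion fun c _ => (Set.finite_Iic _).biUnion fun i _ => Set.finite_singleton _
  obtain ⟨K, hK⟩ : ∃ K, ∀ g, l (t g) ≤ K := by
    obtain ⟨K, hK⟩ := (htf.image l).bddAbove
    exact ⟨K, fun g => hK ⟨_, ⟨g, rfl⟩, rfl⟩⟩
  obtain ⟨K2, hK2⟩ := (hPf.image fun v => l (j v)).bddAbove
  obtain ⟨M, hM⟩ : ∃ M, ∀ x : α × Bool, l (j (FreeGroup.mk [x])) ≤ M := by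
    obtain ⟨M, hM⟩ := (Set.finite_range fun x : α × Bool => l (j (FreeGroup.mk [x]))).bddAbove
    exact ⟨M, fun x => hM ⟨x, rfl⟩⟩
  let side : FreeGroup α → FreeGroup α → Option (α × Bool) :=
    fun z f => (f * z⁻¹).toWord.getLast?
  have hcross : ∀ z a g, l a ≤ 1 → side z (π (a * g)) ≠ side z (π g) →
      l (g * (j z)⁻¹) ≤ K + K2 := by
    intro z a g ha hs
    set c := π (a * g) * (π g)⁻¹ with hc
    have hc' : π (a * g) = c * π g := by rw [hc]; group
    simp only [side] at hs
    rw [hc', mul_assoc] at hs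
    rw [← FreeGroup.mk_toWord (x := c)] at hs
    obtain ⟨i, hi, hv⟩ := vf_side_mk _ _ hs
    have h2 : l (j (π g * z⁻¹)) ≤ K2 := by
      refine hK2 ⟨_, ?_, rfl⟩
      simp only [Set.mem_iUnion]
      exact ⟨c, ⟨a, g, ha, hc'⟩, i, hi, hv⟩
    have e : g * (j z)⁻¹ = t g * j (π g * z⁻¹) := by
      conv_lhs => rw [hπ g]
      rw [map_mul, map_inv, mul_assoc]
    rw [e]
    exact (hmul _ _).trans (add_le_add (hK g) h2)
  set Δ := K + K2 with hΔ
  have hpath : ∀ z a n u, l u = n → side z (π (u * a)) ≠ side z (π a) →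
      l (u * a * (j z)⁻¹) + l (a * (j z)⁻¹) ≤ n + 2 * Δ := by
    intro z a n
    induction n with
    | zero =>
      intro u hu hs
      have h := hcross z u a (by omega) hs
      have := hmul u (a * (j z)⁻¹)
      rw [← mul_assoc] at this
      omega
    | succ n ih =>
      intro u hu hs
      obtain ⟨s, v, rfl, hs1, hv⟩ := hstep u n hu
      have h0 := hmul s (v * a * (j z)⁻¹)
      have e : s * (v * a * (j z)⁻¹) = s * v * a * (j z)⁻¹ := by group
      rw [e] at h0
      by_cases h : side z (π (v * a)) = side z (π a)
      · rw [← h, mul_assoc] at hs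
        have h1 := hcross z s (v * a) hs1 hs
        have h2 := hmul v⁻¹ (v * a * (j z)⁻¹)
        rw [hinv, hv] at h2
        have e2 : v⁻¹ * (v * a * (j z)⁻¹) = a * (j z)⁻¹ := by group
        rw [e2] at h2
        omega
      · have := ih v hv h
        omega
  refine ⟨4 * Δ + M, fun a b hab => ?_⟩
  set w := π a * (π b)⁻¹ with hw
  let z : ℕ → FreeGroup α := fun k => FreeGroup.mk (w.toWord.drop k) * π b
  have hz0 : z 0 = π a := by
    simp only [z, List.drop_zero, FreeGroup.mk_toWord, hw]; group
  have hzn : z w.toWord.length = π b := by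
    simp only [z, List.drop_length, ← FreeGroup.one_eq_mk, one_mul]
  have hproj : ∀ g, l (g * (j (π g))⁻¹) ≤ K := fun g => by
    rw [← eq_mul_inv_of_mul_eq (hπ g).symm]; exact hK g
  have hlast : 2 * Δ < l (a * (j (z w.toWord.length))⁻¹) := by
    rw [hzn]
    have h1 := hproj b
    have h2 := hmul (a * (j (π b))⁻¹) (b * (j (π b))⁻¹)⁻¹
    have e : a * (j (π b))⁻¹ * (b * (j (π b))⁻¹)⁻¹ = a * b⁻¹ := by group
    rw [hinv, e] at h2
    omega
  have hexk : ∃ k, 2 * Δ < l (a * (j (z k))⁻¹) := ⟨_, hlast⟩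
  set k := Nat.find hexk with hk
  have hk1 : 2 * Δ < l (a * (j (z k))⁻¹) := Nat.find_spec hexk
  have hkle : k ≤ w.toWord.length := Nat.find_min' _ hlast
  have hkpos : 1 ≤ k := by
    by_contra h
    have h0 : k = 0 := by omega
    rw [h0, hz0] at hk1
    have := hproj a
    omega
  have hkm : l (a * (j (z (k-1)))⁻¹) ≤ 2 * Δ := by
    have := Nat.find_min hexk (m := k - 1) (by omega)
    omega
  have hzstep : z (k-1) = FreeGroup.mk [w.toWord[k-1] ] * z k := by
    simp only [z]
    rw [List.drop_eq_getElem_cons (by omega : k - 1 < w.toWord.length), ← mul_assoc,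
      FreeGroup.mul_mk]
    have : k - 1 + 1 = k := by omega
    rw [this]; rfl
  have hkup : l (a * (j (z k))⁻¹) ≤ 2 * Δ + M := by
    have h1 := hmul (a * (j (z (k-1)))⁻¹) (j (FreeGroup.mk [w.toWord[k-1] ]))
    have h2 := hM w.toWord[k-1]
    have e : a * (j (z (k-1)))⁻¹ * (j (FreeGroup.mk [w.toWord[k-1] ])) = a * (j (z k))⁻¹ := by
      rw [hzstep, map_mul]; group
    rw [e] at h1
    omega
  have hkb : 2 * Δ < l (b * (j (z k))⁻¹) := by
    have h2 := hmul (a * (j (z k))⁻¹) (b * (j (z k))⁻¹)⁻¹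
    have e : a * (j (z k))⁻¹ * (b * (j (z k))⁻¹)⁻¹ = a * b⁻¹ := by group
    rw [hinv, e] at h2
    omega
  have hsides : side (z k) (π a) ≠ side (z k) (π b) := by
    have h := vf_side_split w k hkpos hkle
    have e1 : π a * (z k)⁻¹ = FreeGroup.mk (w.toWord.take k) := by
      have : FreeGroup.mk (w.toWord.take k) * FreeGroup.mk (w.toWord.drop k) = w := by
        rw [FreeGroup.mul_mk, List.take_append_drop, FreeGroup.mk_toWord]
      rw [eq_mul_inv_of_mul_eq this]
      have ha : π a = w * π b := by rw [hw]; group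
      rw [ha]
      simp only [z]; group
    have e2 : π b * (z k)⁻¹ = (FreeGroup.mk (w.toWord.drop k))⁻¹ := by
      simp only [z]; group
    simp only [side]
    rw [e1, e2]; exact h
  refine ⟨j (z k), fun x => ?_⟩
  by_cases hx : side (z k) (π x) = side (z k) (π a)
  · right
    have := hpath (z k) b _ (x * b⁻¹) rfl (by
      rw [inv_mul_cancel_right, hx]; exact hsides)
    rw [inv_mul_cancel_right] at this
    omega
  · left
    have := hpath (z k) a _ (x * a⁻¹) rfl (by
      rw [inv_mul_cancel_right]; exact hx)
    rw [inv_mul_cancel_right] at this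
    omega

/-- Finite subgroups of a finitely generated virtually free group are, up to conjugation,
contained in a fixed finite set. -/
theorem vf_finite_subgroups {G : Type*} [Group G] (hfg : Group.FG G) (hvf : VirtuallyFree G) :
    ∃ B : Set G, B.Finite ∧ ∀ H : Subgroup G, (H : Set G).Finite →
      ∃ c : G, ∀ h ∈ H, c * h * c⁻¹ ∈ B := by
  classical
  obtain ⟨F, hF, ⟨hfree⟩⟩ := hvf
  have hFfg : Group.FG F := Subgroup.fg_of_index_ne_zero F
  let e := IsFreeGroup.mulEquiv F
  have hfgF : Group.FG (FreeGroup (IsFreeGroup.Generators F)) :=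
    Group.fg_of_surjective (f := e.symm.toMonoidHom) e.symm.surjective
  have := vf_basis_finite hfgF
  let j : FreeGroup (IsFreeGroup.Generators F) →* G := F.subtype.comp e.toMonoidHom
  have hj : Function.Injective j := F.subtype_injective.comp e.injective
  have hr : j.range = F := by
    simp only [j]
    rw [MonoidHom.range_comp, MonoidHom.range_eq_top.2 e.surjective, ← MonoidHom.range_eq_map,
      Subgroup.range_subtype]
  obtain ⟨S, hS⟩ := Group.fg_def.1 hfg
  obtain ⟨l, h1, h2, h3, h4, h5⟩ := vf_exists_len (S : Set G) S.finite_toSet hS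
  obtain ⟨D, hD⟩ := vf_bottleneck j hj (by rw [hr]; exact hF) l h1 h2 h3 h4 h5
  exact ⟨_, h4 D, fun H hH => vf_center l D hD H hH⟩

theorem vf_term {G : Type*} (G' : Type*) [Group G] [Group G'] (n : ℕ) (s : Fin n → G)
    (hs : Subgroup.closure (Set.range s) = ⊤) (g : G) :
    ∃ t : groupLang.Term (Fin n), ∀ φ : G →* G', t.realize (fun i => φ (s i)) = φ g := by
  have hg : g ∈ Subgroup.closure (Set.range s) := by rw [hs]; trivial
  induction hg using Subgroup.closure_induction with
  | mem x hx =>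
    obtain ⟨i, rfl⟩ := hx
    exact ⟨Term.var i, fun φ => rfl⟩
  | one => exact ⟨Term.func (L := groupLang) (l := 0) GroupFunc.one Fin.elim0,
      fun φ => (map_one φ).symm⟩
  | mul x y _ _ hx hy =>
    obtain ⟨t, ht⟩ := hx
    obtain ⟨t', ht'⟩ := hy
    refine ⟨Term.func (L := groupLang) (l := 2) GroupFunc.mul ![t, t'], fun φ => ?_⟩
    rw [map_mul, ← ht, ← ht']; rfl
  | inv x _ hx =>
    obtain ⟨t, ht⟩ := hx
    refine ⟨Term.func (L := groupLang) (l := 1) GroupFunc.inv ![t], fun φ => ?_⟩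
    rw [map_inv, ← ht]; rfl

theorem vf_exs {α : Type*} : ∀ {k : ℕ} (χ : groupLang.BoundedFormula α k),
    IsExistentialQF χ → IsExistentialQF χ.exs
  | 0, _, h => h
  | _ + 1, _, h => vf_exs (BoundedFormula.ex _) (IsExistentialQF.ex h)

theorem vf_foldr_isQF {α : Type*} {k : ℕ} (L : List (groupLang.BoundedFormula α k))
    (h : ∀ χ ∈ L, χ.IsQF) : (L.foldr (· ⊓ ·) ⊤).IsQF := by
  induction L with
  | nil => exact BoundedFormula.IsQF.top
  | cons x L ih =>
    exact (h x (by simp)).inf (ih fun χ hχ => h χ (by simp [hχ]))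

end VFHelpers

/-- There is an existential formula in `2n` variables expressing, over any group
`G'`, that two homomorphisms `φ, φ' : G → G'` are equivalent, in terms of the
images of a fixed generating tuple of `G`. -/
theorem exists_existential_formula_homEquiv
    (G : Type*) (G' : Type*) [Group G] [Group G']
    (hfg : Group.FG G) (hvf : VirtuallyFree G)
    (n : ℕ) (s : Fin n → G) (hs : Subgroup.closure (Set.range s) = ⊤) :
    ∃ ψ : groupLang.Formula (Fin (n + n)), IsExistentialQF ψ ∧
      ∀ φ φ' : G →* G',
        (HomEquiv φ φ' ↔
          ψ.Realize (Fin.append (fun i => φ (s i)) (fun i => φ' (s i)))) := by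
  classical
  obtain ⟨B, hB, hBH⟩ := vf_finite_subgroups hfg hvf
  let E : Set (Subgroup G) := {H | (H : Set G) ⊆ B}
  have hE : E.Finite :=
    (hB.finite_subsets.preimage (f := fun H : Subgroup G => (H : Set G))
      SetLike.coe_injective.injOn)
  have : Finite E := hE
  have : Finite B := hB
  obtain ⟨k, ⟨e⟩⟩ := Finite.exists_equiv_fin E
  choose t ht using vf_term G' n s hs
  -- the two terms attached to an element
  let tl : G → groupLang.Term (Fin (n + n) ⊕ Fin k) := fun g =>
    (t g).relabel fun i => Sum.inl (Fin.castAdd n i)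
  let tr : G → groupLang.Term (Fin (n + n) ⊕ Fin k) := fun g =>
    (t g).relabel fun i => Sum.inl (Fin.natAdd n i)
  let y : Fin k → groupLang.Term (Fin (n + n) ⊕ Fin k) := fun i => Term.var (Sum.inr i)
  let mulT : groupLang.Term (Fin (n + n) ⊕ Fin k) → groupLang.Term (Fin (n + n) ⊕ Fin k) →
      groupLang.Term (Fin (n + n) ⊕ Fin k) := fun a b =>
    Term.func (L := groupLang) (l := 2) GroupFunc.mul ![a, b]
  let I := {p : E × B // (p.2 : G) ∈ (p.1 : Subgroup G)}
  let eqn : I → groupLang.BoundedFormula (Fin (n + n)) k := fun p =>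
    (mulT (tr p.1.2) (y (e p.1.1))).bdEqual (mulT (y (e p.1.1)) (tl p.1.2))
  let χ : groupLang.BoundedFormula (Fin (n + n)) k := BoundedFormula.iInf eqn
  have hχ : χ.IsQF := by
    apply vf_foldr_isQF
    intro c hc
    obtain ⟨p, -, rfl⟩ := List.mem_map.1 hc
    exact (BoundedFormula.IsAtomic.equal _ _).isQF
  refine ⟨χ.exs, vf_exs χ (.of_isQF hχ), fun φ φ' => ?_⟩
  have hreal : χ.exs.Realize (Fin.append (fun i => φ (s i)) (fun i => φ' (s i))) ↔
      ∃ ys : Fin k → G', ∀ p : I, φ' p.1.2 * ys (e p.1.1) = ys (e p.1.1) * φ p.1.2 := by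
    rw [BoundedFormula.realize_exs]
    refine exists_congr fun ys => ?_
    rw [BoundedFormula.realize_iInf]
    refine forall_congr' fun p => ?_
    have hl : (tl p.1.2).realize
        (Sum.elim (Fin.append (fun i => φ (s i)) (fun i => φ' (s i))) ys) = φ p.1.2 := by
      rw [Term.realize_relabel, ← ht]
      congr 1
      funext i
      simp
    have hr : (tr p.1.2).realize
        (Sum.elim (Fin.append (fun i => φ (s i)) (fun i => φ' (s i))) ys) = φ' p.1.2 := by
      rw [Term.realize_relabel, ← ht]
      congr 1
      funext i
      exact Fin.append_right (fun i => φ (s i)) (fun i => φ' (s i)) i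
    rw [← hl, ← hr]
    exact Iff.rfl
  rw [hreal]
  constructor
  · intro h
    have h' : ∀ H : E, ∃ g' : G', ∀ h ∈ (H : Subgroup G), φ' h = g' * φ h * g'⁻¹ := fun H =>
      h H (hB.subset H.2)
    choose g hg using h'
    refine ⟨fun i => g (e.symm i), fun p => ?_⟩
    simp only [e.symm_apply_apply]
    rw [hg _ _ p.2]
    group
  · rintro ⟨ys, hys⟩ H hH
    obtain ⟨c, hc⟩ := hBH H hH
    let Hc : Subgroup G := H.map (MulAut.conj c).toMonoidHom
    have hHc : Hc ∈ E := by
      rintro _ ⟨h, hh, rfl⟩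
      exact hc h hh
    refine ⟨(φ' c)⁻¹ * ys (e ⟨Hc, hHc⟩) * φ c, fun h hh => ?_⟩
    have := hys ⟨(⟨Hc, hHc⟩, ⟨c * h * c⁻¹, hc h hh⟩), ⟨h, hh, rfl⟩⟩
    simp only [map_mul, map_inv] at this
    have h2 := eq_mul_inv_of_mul_eq this
    have h3 : φ' h = (φ' c)⁻¹ * (φ' c * φ' h * (φ' c)⁻¹) * φ' c := by group
    rw [h3, h2]
    group
end

section
/- Let G be a finitely generated co-Hopfian virtually free group. Then every class-permuting group endomorphism of G is an automorphism of G (bijective). -/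
open FirstOrder Language

/-- Combinatorial description of an action of a group on a tree without inversions:
`V` is the vertex set, `P` the set of oriented edges, `B a` the half-tree of `a`. -/
structure TreeAct (G : Type*) [Group G] (V P : Type*) [MulAction G V] [MulAction G P] where
  c : P → P
  B : P → Set V
  c_c : ∀ a, c (c a) = a
  c_smul : ∀ (g : G) a, c (g • a) = g • c a
  mem_c : ∀ a x, x ∈ B (c a) ↔ x ∉ B a
  mem_smul : ∀ (g : G) a x, g • x ∈ B (g • a) ↔ x ∈ B a
  noinv : ∀ (g : G) a, g • a ≠ c a
  nested : ∀ a b x y u t, x ∈ B a → x ∈ B b → y ∈ B a → y ∉ B b → u ∉ B a → u ∈ B b →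
    t ∉ B a → t ∉ B b → False
  sep_fin : ∀ x y, {b | x ∉ B b ∧ y ∈ B b}.Finite
  sep : ∀ x y, (∀ b, x ∉ B b → y ∈ B b → False) → x = y
  edge_exists : ∀ a, ∃ x y, x ∉ B a ∧ y ∈ B a ∧ ∀ b, b ≠ a → b ≠ c a → (x ∈ B b ↔ y ∈ B b)

namespace TreeAct

variable {G : Type*} [Group G] {V P : Type*} [MulAction G V] [MulAction G P]
  (T : TreeAct G V P)

/-- `a` is an oriented edge from `x` to `y`. -/
def Edge (a : P) (x y : V) : Prop :=
  x ∉ T.B a ∧ y ∈ T.B a ∧ ∀ b, b ≠ a → b ≠ T.c a → (x ∈ T.B b ↔ y ∈ T.B b)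

variable {T}

theorem c_ne (a : P) : T.c a ≠ a := by
  intro h
  have := T.noinv (1 : G) a
  rw [one_smul] at this
  exact this h.symm

theorem Edge.symm {a : P} {x y : V} (h : T.Edge a x y) : T.Edge (T.c a) y x := by
  refine ⟨?_, ?_, ?_⟩
  · rw [T.mem_c]; exact fun h' => h' h.2.1
  · rw [T.mem_c]; exact h.1
  · intro b h1 h2
    rw [T.c_c] at h2
    exact (h.2.2 b h2 h1).symm

theorem Edge.smul {a : P} {x y : V} (h : T.Edge a x y) (g : G) :
    T.Edge (g • a) (g • x) (g • y) := by
  refine ⟨?_, ?_, ?_⟩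
  · rw [T.mem_smul]; exact h.1
  · rw [T.mem_smul]; exact h.2.1
  · intro b h1 h2
    have hb : b = g • (g⁻¹ • b) := by simp
    rw [hb, T.mem_smul, T.mem_smul]
    apply h.2.2
    · intro h'; apply h1; rw [← h']; simp
    · intro h'; apply h2; rw [T.c_smul, ← h']; simp

theorem B_inj {a b : P} (h : T.B a = T.B b) : a = b := by
  obtain ⟨x, y, hx, hy, hxy⟩ := T.edge_exists a
  by_contra hne
  have h1 : b ≠ a := fun h' => hne h'.symm
  by_cases h2 : b = T.c a
  · have := T.mem_c a y
    rw [← h2, ← h] at this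
    tauto
  · have := hxy b h1 h2
    rw [← h] at this
    tauto

theorem Edge.unique {a : P} {x y x' y' : V} (h : T.Edge a x y) (h' : T.Edge a x' y') :
    x = x' ∧ y = y' := by
  have key : ∀ b, b ≠ a → b ≠ T.c a → (x ∈ T.B b ↔ x' ∈ T.B b) := by
    intro b h1 h2
    have e1 := h.2.2 b h1 h2
    have e2 := h'.2.2 b h1 h2
    by_contra hc
    by_cases hx : x ∈ T.B b
    · have hx' : x' ∉ T.B b := by tauto
      exact T.nested a b y y' x x' h.2.1 (by tauto) h'.2.1 (by tauto) h.1 hx h'.1 hx'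
    · have hx' : x' ∈ T.B b := by tauto
      exact T.nested a b y' y x' x h'.2.1 (by tauto) h.2.1 (by tauto) h'.1 hx' h.1 hx
  constructor
  · apply T.sep
    intro b h1 h2
    by_cases e1 : b = a
    · subst e1; exact h'.1 h2
    by_cases e2 : b = T.c a
    · subst e2; rw [T.mem_c] at h1; exact h1 h.1
    exact h1 ((key b e1 e2).2 h2)
  · apply T.sep
    intro b h1 h2
    by_cases e1 : b = a
    · subst e1; exact h1 h.2.1
    by_cases e2 : b = T.c a
    · subst e2; rw [T.mem_c] at h2; exact h2 h'.2.1
    exact h1 ((h.2.2 b e1 e2).1 ((key b e1 e2).2 ((h'.2.2 b e1 e2).2 h2)))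

/-- For `x ≠ v` there is an edge ending in `x` and coming from the direction of `v`. -/
theorem exists_pred (T : TreeAct G V P) {v x : V} (h : x ≠ v) :
    ∃ b y, T.Edge b y x ∧ v ∉ T.B b := by
  have hne : {b | v ∉ T.B b ∧ x ∈ T.B b}.Nonempty := by
    by_contra hc
    apply h
    symm
    apply T.sep
    intro b h1 h2
    exact hc ⟨b, h1, h2⟩
  obtain ⟨b, hb, hmin⟩ := (T.sep_fin v x).exists_minimalFor T.B _ hne
  obtain ⟨u, w, hu, hw, huw⟩ := T.edge_exists b
  have : x = w := by
    by_contra hxw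
    have hd : ∃ d, w ∉ T.B d ∧ x ∈ T.B d := by
      by_contra hc
      apply hxw
      symm
      apply T.sep
      intro d h1 h2
      exact hc ⟨d, h1, h2⟩
    obtain ⟨d, hd1, hd2⟩ := hd
    have e1 : d ≠ b := by rintro rfl; exact hd1 hw
    have e2 : d ≠ T.c b := by rintro rfl; rw [T.mem_c] at hd2; exact hd2 hb.2
    have hud : u ∉ T.B d := fun h' => hd1 ((huw d e1 e2).1 h')
    have hsub : T.B d ⊆ T.B b := by
      intro t ht
      by_contra htb
      exact T.nested b d x w t u hb.2 hd2 hw hd1 htb ht hu hud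
    have hv : v ∉ T.B d := fun h' => hb.1 (hsub h')
    exact hd1 (hmin (j := d) ⟨hv, hd2⟩ hsub hw)
  subst this
  exact ⟨b, u, ⟨hu, hw, huw⟩, hb.1⟩

theorem pred_unique {v x y y' : V} {b b' : P} (h : T.Edge b y x) (hv : v ∉ T.B b)
    (h' : T.Edge b' y' x) (hv' : v ∉ T.B b') : b = b' ∧ y = y' := by
  have : b = b' := by
    by_contra hne
    have e1 : b' ≠ T.c b := by
      rintro rfl
      have := h'.2.1
      rw [T.mem_c] at this
      exact this h.2.1
    have e2 : b ≠ T.c b' := by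
      rintro rfl
      rw [T.c_c] at e1; exact e1 rfl
    have f1 := h.2.2 b' (fun h => hne h.symm) e1
    have f2 := h'.2.2 b hne e2
    exact T.nested b b' x y' y v h.2.1 h'.2.1 (f2.2 h.2.1) h'.1 h.1 (f1.2 h'.2.1) hv hv'
  subst this
  exact ⟨rfl, (h.unique h').1⟩

/-- Number of edges separating. -/
noncomputable def N (T : TreeAct G V P) (x y : V) : ℕ := {b | x ∉ T.B b ∧ y ∈ T.B b}.ncard

theorem sep_pred {v x y : V} {b : P} (h : T.Edge b y x) (hv : v ∉ T.B b) :
    {d | v ∉ T.B d ∧ y ∈ T.B d} ⊂ {d | v ∉ T.B d ∧ x ∈ T.B d} := by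
  rw [Set.ssubset_iff_of_subset]
  · exact ⟨b, ⟨hv, h.2.1⟩, fun h' => h.1 h'.2⟩
  · rintro d ⟨h1, h2⟩
    refine ⟨h1, ?_⟩
    by_cases e1 : d = b
    · subst e1; exact h.2.1
    by_cases e2 : d = T.c b
    · subst e2; rw [T.mem_c] at h1; exact absurd hv h1
    exact (h.2.2 d e1 e2).1 h2

theorem N_lt {v x y : V} {b : P} (h : T.Edge b y x) (hv : v ∉ T.B b) :
    T.N v y < T.N v x :=
  Set.ncard_lt_ncard (sep_pred h hv) (T.sep_fin v x)

/-- Induction along paths starting at `v`. -/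
theorem path_induction (T : TreeAct G V P) (v : V) {Q : V → Prop} (h0 : Q v)
    (hs : ∀ b x y, T.Edge b y x → v ∉ T.B b → Q y → Q x) (x : V) : Q x := by
  induction hn : T.N v x using Nat.strong_induction_on generalizing x with
  | _ n ih =>
    by_cases hx : x = v
    · subst hx; exact h0
    · obtain ⟨b, y, h, hv⟩ := T.exists_pred hx
      exact hs b x y h hv (ih (T.N v y) (hn ▸ N_lt h hv) y rfl)

open Classical in
/-- Potential function on a tree. -/
noncomputable def pot (T : TreeAct G V P) (v : V) (l : P → G) (x : V) : G :=
  if h : x = v then 1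
  else pot T v l (T.exists_pred h).choose_spec.choose * l (T.exists_pred h).choose
termination_by T.N v x
decreasing_by
  exact N_lt (T.exists_pred h).choose_spec.choose_spec.1 (T.exists_pred h).choose_spec.choose_spec.2

theorem pot_pred (T : TreeAct G V P) (v : V) (l : P → G) {b : P} {x y : V}
    (h : T.Edge b x y) (hv : v ∉ T.B b) : T.pot v l y = T.pot v l x * l b := by
  have hy : y ≠ v := by rintro rfl; exact hv h.2.1
  rw [pot, dif_neg hy]
  have hs := (T.exists_pred hy).choose_spec.choose_spec
  obtain ⟨h1, h2⟩ := pred_unique hs.1 hs.2 h hv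
  exact congrArg₂ (· * ·) (congrArg _ h2) (congrArg _ h1)

/-- Existence of potentials on a tree. -/
theorem exists_potential (T : TreeAct G V P) (v : V) (l : P → G)
    (hl : ∀ b, l (T.c b) = (l b)⁻¹) :
    ∃ k : V → G, k v = 1 ∧ ∀ b x y, T.Edge b x y → k y = k x * l b := by
  refine ⟨T.pot v l, ?_, ?_⟩
  · rw [pot, dif_pos rfl]
  · intro b x y h
    by_cases hv : v ∈ T.B b
    · have := T.pot_pred v l h.symm (by rw [T.mem_c]; exact fun h' => h' hv)
      rw [this, hl]; group
    · exact T.pot_pred v l h hv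

end TreeAct


namespace TreeAct

variable {G : Type*} [Group G] {V P : Type*} [MulAction G V] [MulAction G P]

open Classical in
/-- The twisting cocycle. -/
noncomputable def lam (T : TreeAct G V P) (a : P) (z : G) (b : P) : G :=
  if h : ∃ g : G, b = g • a then h.choose * z * h.choose⁻¹
  else if h : ∃ g : G, b = g • T.c a then h.choose * z⁻¹ * h.choose⁻¹ else 1

theorem lam_a (T : TreeAct G V P) {a : P} {z : G} (hz : ∀ g : G, g • a = a → g * z = z * g)
    (g : G) : T.lam a z (g • a) = g * z * g⁻¹ := by
  have h : ∃ g' : G, g • a = g' • a := ⟨g, rfl⟩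
  rw [lam, dif_pos h]
  have hs := h.choose_spec
  set k := h.choose
  have : (k⁻¹ * g) * z = z * (k⁻¹ * g) := by
    apply hz
    rw [mul_smul, hs, inv_smul_smul]
  have e : g = k * (k⁻¹ * g) := by group
  calc k * z * k⁻¹ = k * (z * (k⁻¹ * g)) * g⁻¹ := by group
    _ = k * ((k⁻¹ * g) * z) * g⁻¹ := by rw [this]
    _ = g * z * g⁻¹ := by group

theorem lam_c (T : TreeAct G V P) {a : P} {z : G} (hz : ∀ g : G, g • a = a → g * z = z * g)
    (g : G) : T.lam a z (g • T.c a) = g * z⁻¹ * g⁻¹ := by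
  have h0 : ¬ ∃ g' : G, g • T.c a = g' • a := by
    rintro ⟨g', h⟩
    apply T.noinv (g⁻¹ * g') a
    rw [mul_smul, ← h, inv_smul_smul]
  have h : ∃ g' : G, g • T.c a = g' • T.c a := ⟨g, rfl⟩
  rw [lam, dif_neg h0, dif_pos h]
  have hs := h.choose_spec
  set k := h.choose
  have : (k⁻¹ * g) * z = z * (k⁻¹ * g) := by
    apply hz
    have h1 : T.c (g • a) = T.c (k • a) := by rw [T.c_smul, T.c_smul, hs]
    have h2 : g • a = k • a := by rw [← T.c_c (g • a), h1, T.c_c]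
    rw [mul_smul, h2, inv_smul_smul]
  calc k * z⁻¹ * k⁻¹ = k * (z⁻¹ * ((k⁻¹ * g) * z) * z⁻¹) * g⁻¹ := by group
    _ = k * (z⁻¹ * (z * (k⁻¹ * g)) * z⁻¹) * g⁻¹ := by rw [this]
    _ = g * z⁻¹ * g⁻¹ := by group

theorem lam_cases (T : TreeAct G V P) (a : P) (z : G) (b : P) :
    (∃ g : G, b = g • a) ∨ (∃ g : G, b = g • T.c a) ∨
      (T.lam a z b = 1 ∧ (¬ ∃ g : G, b = g • a) ∧ ¬ ∃ g : G, b = g • T.c a) := by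
  by_cases h1 : ∃ g : G, b = g • a
  · exact Or.inl h1
  by_cases h2 : ∃ g : G, b = g • T.c a
  · exact Or.inr (Or.inl h2)
  refine Or.inr (Or.inr ⟨?_, h1, h2⟩)
  rw [lam, dif_neg h1, dif_neg h2]

theorem lam_one (T : TreeAct G V P) {a : P} {z : G} {b : P} (h1 : ¬ ∃ g : G, b = g • a)
    (h2 : ¬ ∃ g : G, b = g • T.c a) : T.lam a z b = 1 := by
  rw [lam, dif_neg h1, dif_neg h2]

theorem lam_compl (T : TreeAct G V P) {a : P} {z : G}
    (hz : ∀ g : G, g • a = a → g * z = z * g) (b : P) :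
    T.lam a z (T.c b) = (T.lam a z b)⁻¹ := by
  rcases T.lam_cases a z b with ⟨g, rfl⟩ | ⟨g, rfl⟩ | ⟨h, h1, h2⟩
  · rw [T.c_smul, T.lam_c hz, T.lam_a hz]; group
  · rw [T.c_smul, T.c_c, T.lam_c hz, T.lam_a hz]; group
  · rw [h, T.lam_one]
    · simp
    · rintro ⟨g, hg⟩; apply h2; refine ⟨g, ?_⟩; rw [← T.c_smul, ← hg, T.c_c]
    · rintro ⟨g, hg⟩; apply h1; refine ⟨g, ?_⟩
      rw [← T.c_smul] at hg
      rw [← T.c_c b, hg, T.c_c]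

theorem lam_smul (T : TreeAct G V P) {a : P} {z : G}
    (hz : ∀ g : G, g • a = a → g * z = z * g) (k : G) (b : P) :
    T.lam a z (k • b) = k * T.lam a z b * k⁻¹ := by
  rcases T.lam_cases a z b with ⟨g, rfl⟩ | ⟨g, rfl⟩ | ⟨h, h1, h2⟩
  · rw [← mul_smul, T.lam_a hz, T.lam_a hz]; group
  · rw [← mul_smul, T.lam_c hz, T.lam_c hz]; group
  · rw [h, T.lam_one]
    · simp
    · rintro ⟨g, hg⟩; apply h1; refine ⟨k⁻¹ * g, ?_⟩; rw [mul_smul, ← hg, inv_smul_smul]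
    · rintro ⟨g, hg⟩; apply h2; refine ⟨k⁻¹ * g, ?_⟩; rw [mul_smul, ← hg, inv_smul_smul]

theorem lam_mem (T : TreeAct G V P) {a : P} {z : G}
    (hz : ∀ g : G, g • a = a → g * z = z * g) (hs : T.B (z • a) ⊆ T.B a) (b : P) (t : V)
    (ht : t ∈ T.B b) : T.lam a z b • t ∈ T.B b := by
  rcases T.lam_cases a z b with ⟨g, rfl⟩ | ⟨g, rfl⟩ | ⟨h, h1, h2⟩
  · rw [T.lam_a hz]
    have e : (g * z * g⁻¹) • t = g • (z • (g⁻¹ • t)) := by simp [mul_smul]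
    rw [e, T.mem_smul]
    apply hs
    rw [T.mem_smul, ← T.mem_smul g, smul_inv_smul]
    exact ht
  · rw [T.lam_c hz]
    have e : (g * z⁻¹ * g⁻¹) • t = g • (z⁻¹ • (g⁻¹ • t)) := by simp [mul_smul]
    rw [e, T.mem_smul, T.mem_c]
    have ht' : g⁻¹ • t ∉ T.B a := by
      rw [← T.mem_c, ← T.mem_smul g, smul_inv_smul]
      exact ht
    intro h
    apply ht'
    apply hs
    rw [← T.mem_smul z, smul_inv_smul] at h
    exact h
  · rw [h, one_smul]; exact ht

/-- Twisting along an edge `a` by an element `z` centralizing the stabilizer of `a` and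
moving the half-tree of `a` strictly into itself gives an injective non surjective
endomorphism. -/
theorem twist (T : TreeAct G V P) (a : P) (z : G) (hz : ∀ g : G, g • a = a → g * z = z * g)
    (hs : T.B (z • a) ⊂ T.B a) :
    ∃ ψ : G →* G, Function.Injective ψ ∧ ¬ Function.Surjective ψ := by
  obtain ⟨v, w, hvw⟩ := T.edge_exists a
  have hvw : T.Edge a v w := hvw
  obtain ⟨k, kv, hk⟩ := T.exists_potential v (T.lam a z) (T.lam_compl hz)
  have hkg : ∀ (g : G) (x : V), k (g • x) = k (g • v) * g * k x * g⁻¹ := by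
    intro g x
    induction x using T.path_induction v with
    | h0 => rw [kv]; group
    | hs b x y h _ ih =>
      rw [hk _ _ _ (h.smul g), hk _ _ _ h, ih, T.lam_smul hz]; group
  let ψ : G →* G := MonoidHom.mk' (fun g => k (g • v) * g) (by
    intro g h
    change k ((g * h) • v) * (g * h) = k (g • v) * g * (k (h • v) * h)
    rw [mul_smul, hkg g (h • v)]; group)
  have hψ : ∀ g, ψ g = k (g • v) * g := fun g => rfl
  have hf : ∀ g : G, k (g • v) • (g • v) = ψ g • v := by
    intro g; rw [hψ, mul_smul]
  have claim : ∀ (t : V) (b : P) (x y : V), T.Edge b x y → t ∈ T.B b →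
      (k y)⁻¹ • (k t • t) ∈ T.B b := by
    intro t b x y h ht
    induction hn : T.N t y using Nat.strong_induction_on generalizing b x y with
    | _ n ih =>
      by_cases hy : y = t
      · subst hy; rw [inv_smul_smul]; exact ht
      obtain ⟨e, y', he, hte⟩ := T.exists_pred hy
      have hd := he.symm
      have htd : t ∈ T.B (T.c e) := by rw [T.mem_c]; exact hte
      have h1 := ih _ (hn ▸ N_lt he hte) (T.c e) y y' hd htd rfl
      have h2 := T.lam_mem hz hs.subset _ _ h1
      rw [hk _ _ _ hd, mul_inv_rev, mul_smul, smul_inv_smul] at h2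
      by_contra hb
      have e1 : T.c e ≠ b := by rintro rfl; exact hb h2
      have e2 : T.c e ≠ T.c b := by
        intro h'; rw [h', T.mem_c] at htd; exact htd ht
      have hx : x ∉ T.B (T.c e) := fun h' => hd.1 ((h.2.2 _ e1 e2).1 h')
      exact T.nested b (T.c e) t y _ x ht htd h.2.1 hd.1 hb h2 h.1 hx
  refine ⟨ψ, ?_, ?_⟩
  · rw [injective_iff_map_eq_one]
    intro g hg
    by_cases hgv : g • v = v
    · rw [hψ, hgv, kv, one_mul] at hg; exact hg
    exfalso
    obtain ⟨e, y', he, hte⟩ := T.exists_pred (Ne.symm hgv)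
    have hd := he.symm
    have h1 := claim (g • v) _ _ _ hd (by rw [T.mem_c]; exact hte)
    rw [hf, hg, one_smul, hk _ _ _ hd, kv, one_mul] at h1
    have h2 := T.lam_mem hz hs.subset _ _ h1
    rw [smul_inv_smul] at h2
    exact hd.1 h2
  · intro hsur
    obtain ⟨g, hg⟩ := hsur z
    have hkw : k w = z := by
      rw [hk _ _ _ hvw, kv]
      have := T.lam_a hz 1
      rw [one_smul] at this
      rw [this]; group
    by_cases hgv : g • v ∈ T.B a
    · have h1 := claim (g • v) _ _ _ hvw hgv
      rw [hf, hg, hkw, inv_smul_smul] at h1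
      exact hvw.1 h1
    · have h1 := claim (g • v) _ _ _ hvw.symm (by rw [T.mem_c]; exact hgv)
      rw [hf, hg, kv, inv_one, one_smul, T.mem_c] at h1
      apply h1
      have h2 := hvw.smul z
      have e1 : a ≠ z • a := by
        intro h'; rw [← h'] at hs; exact (ssubset_irrefl _ hs)
      have e2 : a ≠ T.c (z • a) := by
        intro h'
        apply T.noinv z a
        rw [h', T.c_c]
        exact congrArg _ h'.symm
      exact (h2.2.2 a e1 e2).2 (hs.subset h2.2.1)

end TreeAct


namespace TreeAct

variable {G : Type*} [Group G] {V P : Type*} [MulAction G V] [MulAction G P]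

theorem c_inj (T : TreeAct G V P) {a b : P} (h : T.c a = T.c b) : a = b := by
  rw [← T.c_c a, h, T.c_c]

theorem mem_smul_inv (T : TreeAct G V P) (g : G) (b : P) (x : V) :
    x ∈ T.B (g • b) ↔ g⁻¹ • x ∈ T.B b := by
  rw [← T.mem_smul g b, smul_inv_smul]

theorem B_smul_subset (T : TreeAct G V P) (g : G) {a b : P} (h : T.B a ⊆ T.B b) :
    T.B (g • a) ⊆ T.B (g • b) := by
  intro x hx
  rw [mem_smul_inv] at hx ⊢
  exact h hx

theorem B_pow_subset (T : TreeAct G V P) (g : G) {a : P} (h : T.B (g • a) ⊆ T.B a) (j : ℕ) :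
    T.B (g ^ (j + 1) • a) ⊆ T.B (g • a) := by
  induction j with
  | zero => simp
  | succ j ih =>
    rw [pow_succ', mul_smul]
    exact T.B_smul_subset g (ih.trans h)

theorem stab_c (T : TreeAct G V P) (a : P) :
    MulAction.stabilizer G (T.c a) = MulAction.stabilizer G a := by
  ext g
  rw [MulAction.mem_stabilizer_iff, MulAction.mem_stabilizer_iff, ← T.c_smul]
  exact ⟨fun h => T.c_inj h, fun h => by rw [h]⟩

theorem stab_smul_of_normalizer {a : P} {n : G}
    (hn : n ∈ Subgroup.normalizer (MulAction.stabilizer G a : Set G)) :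
    MulAction.stabilizer G (n • a) = MulAction.stabilizer G a := by
  ext g
  have h1 : g ∈ MulAction.stabilizer G (n • a) ↔ n⁻¹ * g * n ∈ MulAction.stabilizer G a := by
    rw [MulAction.mem_stabilizer_iff, MulAction.mem_stabilizer_iff, mul_smul, mul_smul,
      inv_smul_eq_iff]
  rw [h1]
  have := (Subgroup.mem_normalizer_iff.1 hn) (n⁻¹ * g * n)
  rw [this]
  have e : n * (n⁻¹ * g * n) * n⁻¹ = g := by group
  rw [e]

/-- In the co-Hopfian case no element normalizing an edge group is a translation along it. -/
theorem no_hyp (T : TreeAct G V P)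
    (hco : ∀ ψ : G →* G, Function.Injective ψ → Function.Surjective ψ) (a : P)
    (hfin : Finite (MulAction.stabilizer G a)) (n : G)
    (hn : n ∈ Subgroup.normalizer (MulAction.stabilizer G a : Set G)) :
    ¬ T.B (n • a) ⊂ T.B a := by
  intro hs
  have : Finite (MulAut (MulAction.stabilizer G a)) := by
    apply Finite.of_injective (fun e : MulAut (MulAction.stabilizer G a) =>
      (e : MulAction.stabilizer G a → MulAction.stabilizer G a))
    exact DFunLike.coe_injective
  have ho := isOfFinOrder_of_finite (Subgroup.normalizerMonoidHom (MulAction.stabilizer G a) ⟨n, hn⟩)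
  obtain ⟨j, hj, hj1⟩ := ho.exists_pow_eq_one
  rw [← map_pow] at hj1
  obtain ⟨j, rfl⟩ : ∃ i, j = i + 1 := ⟨j - 1, by omega⟩
  obtain ⟨ψ, h1, h2⟩ := T.twist a (n ^ (j + 1)) (by
    intro g hg
    have := congrArg (fun e : MulAut (MulAction.stabilizer G a) => ((e ⟨g, hg⟩ :
      MulAction.stabilizer G a) : G)) hj1
    simp at this
    rw [mul_inv_eq_iff_eq_mul] at this
    exact this.symm) (lt_of_le_of_lt (T.B_pow_subset n hs.subset j) hs)
  exact h2 (hco ψ h1)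

/-- Outward oriented edges for the action of the normalizer of `C`. -/
def Outward (T : TreeAct G V P) (C : Subgroup G) (b : P) : Prop :=
  MulAction.stabilizer G b = C ∧ (∃ n ∈ Subgroup.normalizer (C : Set G), n • b ≠ b) ∧
    ∀ n ∈ Subgroup.normalizer (C : Set G), n • b = b ∨ ∀ x, x ∈ T.B (n • b) → x ∉ T.B b

theorem outward_trichotomy (T : TreeAct G V P)
    (hco : ∀ ψ : G →* G, Function.Injective ψ → Function.Surjective ψ) (b : P)
    (C : Subgroup G) (hC : MulAction.stabilizer G b = C) (hfin : Finite C) :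
    (∀ n ∈ Subgroup.normalizer (C : Set G), n • b = b) ∨ T.Outward C b ∨
      T.Outward C (T.c b) := by
  subst hC
  set C := MulAction.stabilizer G b with hC
  by_cases h0 : ∀ n ∈ Subgroup.normalizer (C : Set G), n • b = b
  · exact Or.inl h0
  right
  have NH := T.no_hyp hco b hfin
  have hle : ∀ n ∈ Subgroup.normalizer (C : Set G), T.B (n • b) ⊆ T.B b → n • b = b := by
    intro n hn h
    by_contra hne
    refine NH n hn (lt_of_le_of_ne h ?_)
    intro h'
    exact hne (B_inj h')
  have hty : ∀ n ∈ Subgroup.normalizer (C : Set G), n • b ≠ b →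
      (∀ x, x ∈ T.B (n • b) → x ∉ T.B b) ∨ (∀ x, x ∉ T.B (n • b) → x ∈ T.B b) := by
    intro n hn hne
    by_contra hc
    push Not at hc
    obtain ⟨⟨x, hx1, hx2⟩, t, ht1, ht2⟩ := hc
    have h1 : ∃ y, y ∈ T.B (n • b) ∧ y ∉ T.B b := by
      by_contra hc
      push Not at hc
      exact hne (hle n hn hc)
    have h2 : ∃ y, y ∈ T.B b ∧ y ∉ T.B (n • b) := by
      by_contra hc
      push Not at hc
      have := T.B_smul_subset n⁻¹ (a := b) (b := n • b) hc
      rw [inv_smul_smul] at this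
      have := hle n⁻¹ (inv_mem hn) this
      rw [inv_smul_eq_iff] at this
      exact hne this.symm
    obtain ⟨y, hy1, hy2⟩ := h1
    obtain ⟨u, hu1, hu2⟩ := h2
    exact T.nested (n • b) b x y u t hx1 hx2 hy1 hy2 hu2 hu1 ht1 ht2
  by_cases h1 : ∀ n ∈ Subgroup.normalizer (C : Set G), n • b = b ∨
      ∀ x, x ∈ T.B (n • b) → x ∉ T.B b
  · push Not at h0
    exact Or.inl ⟨rfl, h0, h1⟩
  right
  push Not at h1
  obtain ⟨n', hn', hne', hx'⟩ := h1
  have h2 : ∀ x, x ∉ T.B (n' • b) → x ∈ T.B b := by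
    rcases hty n' hn' hne' with h | h
    · obtain ⟨x, hx1, hx2⟩ := hx'
      exact absurd hx2 (h x hx1)
    · exact h
  refine ⟨T.stab_c b, ⟨n', hn', ?_⟩, ?_⟩
  · intro h; rw [← T.c_smul] at h; exact hne' (T.c_inj h)
  · intro n hn
    by_cases hne : n • b = b
    · left; rw [← T.c_smul, hne]
    right
    intro x hx1 hx2
    rw [← T.c_smul, T.mem_c] at hx1
    rw [T.mem_c] at hx2
    rcases hty n hn hne with h | h
    · have hsub : T.B (n • b) ⊆ T.B (n' • b) := by
        intro y hy
        by_contra hy'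
        exact h y hy (h2 y hy')
      have := T.B_smul_subset n'⁻¹ hsub
      rw [inv_smul_smul, ← mul_smul] at this
      have := hle _ (mul_mem (inv_mem hn') hn) this
      rw [mul_smul, inv_smul_eq_iff] at this
      rw [← this] at h2
      apply T.noinv n b
      apply B_inj (T := T)
      ext y
      rw [T.mem_c]
      exact ⟨h y, fun hy => by by_contra hc; exact hy (h2 y hc)⟩
    · exact hx2 (h x hx1)

theorem fix_of_edge (T : TreeAct G V P) {a : P} {x y : V} (h : T.Edge a x y) {g : G}
    (hg : g • a = a) : g • x = x ∧ g • y = y := by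
  have := h.smul g
  rw [hg] at this
  exact this.unique h

/-- Existence of a center for the action of the normalizer of an edge group. -/
theorem center (T : TreeAct G V P)
    (hco : ∀ ψ : G →* G, Function.Injective ψ → Function.Surjective ψ)
    (hP : ∃ S : Set P, S.Finite ∧ ∀ b : P, ∃ s ∈ S, ∃ g : G, b = g • s) (a : P)
    (C : Subgroup G) (hC : MulAction.stabilizer G a = C) (hfin : Finite C) :
    ∃ u : V, (∀ g ∈ C, g • u = u) ∧ ∀ m ∈ Subgroup.normalizer (C : Set G), ∀ b : P,
      MulAction.stabilizer G b = C → (u ∈ T.B b ↔ m • u ∈ T.B b) := by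
  classical
  obtain ⟨S, hS, hcov⟩ := hP
  choose s hs g hg using hcov
  have hD : ∀ u : V, {b | T.Outward C b ∧ u ∈ T.B b}.Finite := by
    intro u
    refine Set.Finite.of_finite_image (f := s) (hS.subset ?_) ?_
    · rintro _ ⟨b, _, rfl⟩; exact hs b
    · rintro b ⟨hb, hub⟩ b' ⟨hb', hub'⟩ h
      set n := g b' * (g b)⁻¹ with hn
      have e : n • b = b' := by
        rw [hn, mul_smul]
        have h3 : (g b)⁻¹ • b = s b := by rw [inv_smul_eq_iff]; exact hg b
        rw [h3, h, ← hg]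
      have hnN : n ∈ Subgroup.normalizer (C : Set G) := by
        rw [Subgroup.mem_normalizer_iff]
        intro k
        nth_rewrite 1 [← hb.1]
        rw [← hb'.1]
        rw [MulAction.mem_stabilizer_iff, MulAction.mem_stabilizer_iff, ← e, mul_smul, mul_smul,
          inv_smul_smul, smul_left_cancel_iff]
      rcases hb.2.2 n hnN with h' | h'
      · rw [← e, h']
      · rw [e] at h'
        exact absurd hub (h' u hub')
  have hne : {u : V | ∀ g ∈ C, g • u = u}.Nonempty := by
    obtain ⟨x, y, h⟩ := T.edge_exists a
    refine ⟨x, fun g hg => ?_⟩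
    rw [← hC] at hg
    exact (T.fix_of_edge h hg).1
  obtain ⟨u, hu, hmin⟩ := exists_minimalFor_of_wellFoundedLT (fun u : V => u ∈ {u : V | ∀ g ∈ C, g • u = u})
    (fun u => {b | T.Outward C b ∧ u ∈ T.B b}.ncard) hne
  have hempty : ∀ b, T.Outward C b → u ∉ T.B b := by
    intro b hb hub
    obtain ⟨v, w, h⟩ := T.edge_exists b
    have h : T.Edge b v w := h
    have hv : v ∈ {u : V | ∀ g ∈ C, g • u = u} := by
      intro k hk
      rw [← hb.1] at hk
      exact (T.fix_of_edge h hk).1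
    have hss : {b | T.Outward C b ∧ v ∈ T.B b} ⊂ {b | T.Outward C b ∧ u ∈ T.B b} := by
      rw [Set.ssubset_iff_of_subset]
      · exact ⟨b, ⟨hb, hub⟩, fun h' => h.1 h'.2⟩
      rintro d ⟨hd, hvd⟩
      refine ⟨hd, ?_⟩
      by_contra hud
      have e1 : d ≠ b := by rintro rfl; exact h.1 hvd
      obtain ⟨n, hn, hnb⟩ := hb.2.1
      have hdis := (hb.2.2 n hn).resolve_left hnb
      by_cases e2 : d = T.c b
      · subst e2
        rcases hd.2.2 n hn with h' | h'
        · rw [← T.c_smul] at h'; exact hnb (T.c_inj h')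
        · apply T.noinv n b
          apply B_inj (T := T)
          ext y
          rw [T.mem_c]
          refine ⟨hdis y, fun hy => ?_⟩
          by_contra hc
          have := h' y
          rw [← T.c_smul, T.mem_c, T.mem_c] at this
          exact this hc hy
      have hwd : w ∈ T.B d := (h.2.2 d e1 e2).1 hvd
      have hcov : ∀ t, t ∉ T.B b → t ∈ T.B d := by
        intro t ht
        by_contra htd
        exact T.nested b d w u v t h.2.1 hwd hub hud h.1 hvd ht htd
      have hcov' : ∀ t, t ∉ T.B (n • b) → t ∈ T.B (n • d) := by
        intro t ht
        rw [mem_smul_inv] at ht ⊢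
        exact hcov _ ht
      have hnu : u ∉ T.B (n • b) := fun h' => hdis _ h' hub
      rcases hd.2.2 n hn with h' | h'
      · have := hcov' u hnu
        rw [h'] at this
        exact hud this
      · have hwn : w ∉ T.B (n • b) := fun h' => hdis _ h' h.2.1
        exact h' w (hcov' w hwn) hwd
    have h1 := Set.ncard_lt_ncard hss (hD u)
    have h2 := hmin hv h1.le
    simp only at h2
    omega
  have hinv : ∀ b, T.Outward C b → ∀ m ∈ Subgroup.normalizer (C : Set G), T.Outward C (m • b) := by
    intro b hb m hm
    obtain ⟨h1, ⟨n, hn, hnb⟩, h2⟩ := hb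
    refine ⟨?_, ⟨m * n * m⁻¹, mul_mem (mul_mem hm hn) (inv_mem hm), ?_⟩, ?_⟩
    · rw [stab_smul_of_normalizer (by rw [h1]; exact hm), h1]
    · rw [← mul_smul, inv_mul_cancel_right, mul_smul, Ne, smul_left_cancel_iff]; exact hnb
    · intro k hk
      have e : k • m • b = m • (m⁻¹ * k * m) • b := by
        simp [mul_smul]
      rw [e]
      rcases h2 (m⁻¹ * k * m) (mul_mem (mul_mem (inv_mem hm) hk) hm) with h' | h'
      · left; rw [h']
      · right
        intro x
        rw [T.mem_smul_inv m, T.mem_smul_inv m]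
        exact h' _
  have hempty' : ∀ b, T.Outward C b → ∀ m ∈ Subgroup.normalizer (C : Set G), m • u ∉ T.B b := by
    intro b hb m hm h
    have := hempty _ (hinv b hb m⁻¹ (inv_mem hm))
    rw [mem_smul_inv, inv_inv] at this
    exact this h
  refine ⟨u, hu, ?_⟩
  intro m hm b hb
  rcases T.outward_trichotomy hco b C hb hfin with h | h | h
  · have := h m hm
    constructor
    · intro h'; rw [← this, T.mem_smul]; exact h'
    · intro h'; rw [← this, T.mem_smul] at h'; exact h'
  · exact ⟨fun h' => absurd h' (hempty b h), fun h' => absurd h' (hempty' b h m hm)⟩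
  · have h1 := hempty _ h
    have h2 := hempty' _ h m hm
    rw [T.mem_c, not_not] at h1 h2
    exact ⟨fun _ => h2, fun _ => h1⟩

/-- Fixed point sets are convex. -/
theorem fix_convex (T : TreeAct G V P) {g : G} (hg : IsOfFinOrder g) {x y : V} (hx : g • x = x)
    (hy : g • y = y) {b : P} (h1 : x ∉ T.B b) (h2 : y ∈ T.B b) : g • b = b := by
  have key : ∀ k : G, IsOfFinOrder k → T.B (k • b) ⊆ T.B b → k • b = b := by
    intro k hk hs
    obtain ⟨j, hj, hj1⟩ := hk.exists_pow_eq_one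
    obtain ⟨j, rfl⟩ : ∃ i, j = i + 1 := ⟨j - 1, by omega⟩
    have := T.B_pow_subset k hs j
    rw [hj1, one_smul] at this
    exact B_inj (Set.Subset.antisymm hs this)
  have h1' : x ∉ T.B (g • b) := by rw [← hx, T.mem_smul]; exact h1
  have h2' : y ∈ T.B (g • b) := by rw [← hy, T.mem_smul]; exact h2
  by_cases hs : T.B (g • b) ⊆ T.B b
  · exact key g hg hs
  by_cases hs' : T.B b ⊆ T.B (g • b)
  · have := T.B_smul_subset g⁻¹ hs'
    rw [inv_smul_smul] at this
    have := key _ hg.inv this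
    rw [inv_smul_eq_iff] at this
    exact this.symm
  rw [Set.not_subset] at hs hs'
  obtain ⟨p, hp1, hp2⟩ := hs
  obtain ⟨q, hq1, hq2⟩ := hs'
  exact (T.nested (g • b) b y p q x h2' h2 hp1 hp2 hq2 hq1 h1' h1).elim

theorem exists_equivariant (ψ : G →* G)
    (hψ : ∀ x : V, ∃ q : G, ∀ h : G, h • x = x → ψ h = q * h * q⁻¹) :
    ∃ γ : V → G, ∀ (h : G) (x : V), γ (h • x) = ψ h * γ x * h⁻¹ := by
  choose q hq using hψ
  let r : V → V := fun x => (Quotient.mk (MulAction.orbitRel G V) x).out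
  have hr : ∀ x, ∃ t : G, x = t • r x := by
    intro x
    have : (MulAction.orbitRel G V) x (r x) :=
      (MulAction.orbitRel G V).symm (Quotient.mk_out (s := MulAction.orbitRel G V) x)
    obtain ⟨t, ht⟩ := this
    exact ⟨t, ht.symm⟩
  choose t ht using hr
  have hrs : ∀ (h : G) x, r (h • x) = r x := by
    intro h x
    have : Quotient.mk (MulAction.orbitRel G V) (h • x) = Quotient.mk (MulAction.orbitRel G V) x :=
      Quotient.sound ⟨h, rfl⟩
    simp only [r, this]
  refine ⟨fun x => ψ (t x) * q (r x) * (t x)⁻¹, ?_⟩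
  intro h x
  simp only
  rw [hrs]
  have hst : ((t (h • x))⁻¹ * h * t x) • r x = r x := by
    rw [mul_smul, mul_smul, ← ht, inv_smul_eq_iff]
    conv_rhs => rw [← hrs h x]
    exact ht _
  have := hq (r x) _ hst
  simp only [map_mul, map_inv] at this
  have e : ψ h * ψ (t x) = ψ (t (h • x)) * (q (r x) * ((t (h • x))⁻¹ * h * t x) * (q (r x))⁻¹) := by
    rw [← this]; group
  calc _ = ψ (t (h • x)) * (q (r x) * ((t (h • x))⁻¹ * h * t x) * (q (r x))⁻¹) * q (r x) *
      (t x)⁻¹ * h⁻¹ := by group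
    _ = _ := by rw [← e]; group

/-- The surjectivity theorem. -/
theorem surj (T : TreeAct G V P) [Nonempty V]
    (hco : ∀ ψ : G →* G, Function.Injective ψ → Function.Surjective ψ)
    (hP : ∃ S : Set P, S.Finite ∧ ∀ b : P, ∃ s ∈ S, ∃ g : G, b = g • s)
    (hfin : ∀ x : V, Finite (MulAction.stabilizer G x)) (ψ : G →* G)
    (hψ : ∀ x : V, ∃ q : G, ∀ h : G, h • x = x → ψ h = q * h * q⁻¹) :
    Function.Surjective ψ := by
  obtain ⟨γ, hγ⟩ := exists_equivariant ψ hψ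
  have hle : ∀ {a : P} {x y : V}, T.Edge a x y →
      MulAction.stabilizer G a ≤ MulAction.stabilizer G x :=
    fun h g hg => (T.fix_of_edge h hg).1
  have hfinE : ∀ a : P, Finite (MulAction.stabilizer G a) := by
    intro a
    obtain ⟨x, y, h⟩ := T.edge_exists a
    have := hfin x
    exact Finite.of_injective _ (Subgroup.inclusion_injective (hle h))
  obtain ⟨M, hM⟩ : ∃ M : ℕ, ∀ a : P, Nat.card (MulAction.stabilizer G a) ≤ M := by
    obtain ⟨S, hS, hcov⟩ := hP
    obtain ⟨M, hM⟩ := (hS.image (fun s => Nat.card (MulAction.stabilizer G s))).bddAbove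
    refine ⟨M, fun a => ?_⟩
    obtain ⟨s, hs, g, rfl⟩ := hcov a
    have : Nat.card (MulAction.stabilizer G (g • s)) = Nat.card (MulAction.stabilizer G s) := by
      rw [MulAction.stabilizer_smul_eq_stabilizer_map_conj]
      exact Nat.card_congr (Subgroup.equivMapOfInjective _ _ (MulAut.conj g).injective).symm.toEquiv
    rw [this]
    exact hM ⟨s, hs, rfl⟩
  let R : V → V → Prop := fun x y => γ y * (γ x)⁻¹ ∈ ψ.range
  have Rrefl : ∀ x, R x x := fun x => by simp only [R, mul_inv_cancel]; exact one_mem _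
  have Rtrans : ∀ x y z, R x y → R y z → R x z := by
    intro x y z h1 h2
    have := mul_mem h2 h1
    simp only [R]
    convert this using 1
    group
  have Rmul : ∀ x (h : G), R x (h • x) → γ x * h * (γ x)⁻¹ ∈ ψ.range := by
    intro x h hR
    simp only [R, hγ] at hR
    have : γ x * h * (γ x)⁻¹ = (ψ h * γ x * h⁻¹ * (γ x)⁻¹)⁻¹ * ψ h := by group
    rw [this]
    exact mul_mem (inv_mem hR) ⟨h, rfl⟩
  have hfixψ : ∀ x (h : G), h • x = x → ψ h = γ x * h * (γ x)⁻¹ := by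
    intro x h hx
    have := hγ h x
    rw [hx] at this
    conv_rhs => rw [this]
    nth_rewrite 1 [this]
    group
  have main : ∀ a x y, T.Edge a x y → R x y := by
    intro a
    induction hn : M - Nat.card (MulAction.stabilizer G a) using Nat.strong_induction_on
      generalizing a with
    | _ n ih =>
    intro x y hxy
    have : Finite (MulAction.stabilizer G a) := hfinE a
    set C := MulAction.stabilizer G a with hC
    obtain ⟨u, hu, hsep⟩ := T.center hco hP a C rfl this
    have hR : ∀ m ∈ Subgroup.normalizer (C : Set G), γ u * m * (γ u)⁻¹ ∈ ψ.range := by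
      intro m hm
      apply Rmul
      have hgood : ∀ b, u ∉ T.B b → m • u ∈ T.B b → ∀ x y, T.Edge b x y → R x y := by
        intro b h1 h2
        have hCb : C ≤ MulAction.stabilizer G b := by
          intro g hg
          have hgo : IsOfFinOrder g := by
            have := isOfFinOrder_of_finite (⟨g, hg⟩ : C)
            exact (Submonoid.isOfFinOrder_coe (x := (⟨g, hg⟩ : C))).2 this
          refine T.fix_convex hgo (hu g hg) ?_ h1 h2
          have h3 := (Subgroup.mem_normalizer_iff.1 (inv_mem hm) g).1 hg
          have h4 := hu _ h3
          rw [inv_inv, mul_smul, mul_smul, inv_smul_eq_iff] at h4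
          exact h4
        have hne : MulAction.stabilizer G b ≠ C := by
          intro h
          exact h1 ((hsep m hm b h).2 h2)
        have hlt : C < MulAction.stabilizer G b := lt_of_le_of_ne hCb hne.symm
        have hcard : Nat.card C < Nat.card (MulAction.stabilizer G b) := by
          have := hfinE b
          exact Set.ncard_lt_ncard (SetLike.coe_ssubset_coe.2 hlt)
            (Set.toFinite (MulAction.stabilizer G b : Set G))
        refine ih _ ?_ b rfl
        have := hM b
        omega
      have : ∀ x, (∀ b, u ∉ T.B b → x ∈ T.B b → ∀ x y, T.Edge b x y → R x y) → R u x := by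
        intro x
        induction x using T.path_induction u with
        | h0 => intro _; exact Rrefl u
        | hs b x y h hub ihx =>
          intro hg
          refine Rtrans _ y _ (ihx ?_) (hg b hub h.2.1 _ _ h)
          intro d h1 h2
          have : d ∈ {d | u ∉ T.B d ∧ x ∈ T.B d} := (sep_pred h hub).1 ⟨h1, h2⟩
          exact hg d this.1 this.2
      exact this _ hgood
    have hx : ∀ x, (∀ g ∈ C, g • x = x) → γ x * (γ u)⁻¹ ∈ ψ.range := by
      intro x hx
      have hz : (γ u)⁻¹ * γ x ∈ Subgroup.normalizer (C : Set G) := by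
        apply Subgroup.centralizer_le_normalizer
        rw [Subgroup.mem_centralizer_iff]
        intro h hh
        have e1 := hfixψ x h (hx h hh)
        have e2 := hfixψ u h (hu h hh)
        have e3 : γ x * h * (γ x)⁻¹ = γ u * h * (γ u)⁻¹ := by rw [← e1, e2]
        calc h * ((γ u)⁻¹ * γ x) = (γ u)⁻¹ * (γ u * h * (γ u)⁻¹) * γ x := by group
          _ = (γ u)⁻¹ * γ x * h := by rw [← e3]; group
      have := hR _ hz
      convert this using 1
      group
    have h1 := hx x (fun g hg => (T.fix_of_edge hxy hg).1)
    have h2 := hx y (fun g hg => (T.fix_of_edge hxy hg).2)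
    have := mul_mem h2 (inv_mem h1)
    simp only [R]
    convert this using 1
    group
  obtain ⟨v⟩ := ‹Nonempty V›
  have hall : ∀ x, R v x := by
    intro x
    induction x using T.path_induction v with
    | h0 => exact Rrefl v
    | hs b x y h _ ih => exact Rtrans _ _ _ ih (main _ _ _ h)
  intro g
  have := Rmul v ((γ v)⁻¹ * g * γ v) (hall _)
  have e : γ v * ((γ v)⁻¹ * g * γ v) * (γ v)⁻¹ = g := by group
  rw [e] at this
  exact this

end TreeAct


theorem freeGroup_separate {α : Type*} (w : FreeGroup α) (hw : w ≠ 1) :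
    ∃ K : Subgroup (FreeGroup α), K.FiniteIndex ∧ w ∉ K := by
  classical
  let A : Set (FreeGroup α) := {x | ∃ L', L' <:+ w.toWord ∧ x = FreeGroup.mk L'}
  have hA : A.Finite := by
    have : A = FreeGroup.mk '' {L' | L' ∈ w.toWord.tails} := by
      ext x; simp only [A, Set.mem_ofPred_eq, Set.mem_image, List.mem_tails]
      exact ⟨fun ⟨L, h1, h2⟩ => ⟨L, h1, h2.symm⟩, fun ⟨L, h1, h2⟩ => ⟨L, h1, h2.symm⟩⟩
    rw [this]
    exact (List.finite_toSet _).image _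
  have : Finite A := hA
  have : Fintype A := Fintype.ofFinite A
  have hσ : ∀ i : α, ∃ σ : Equiv.Perm A, ∀ x : A, ∀ h : FreeGroup.of i * x ∈ A,
      σ x = ⟨FreeGroup.of i * x, h⟩ := by
    intro i
    let p : A → Prop := fun x => FreeGroup.of i * (x : FreeGroup α) ∈ A
    let q : A → Prop := fun x => (FreeGroup.of i)⁻¹ * (x : FreeGroup α) ∈ A
    let e : {x // p x} ≃ {x // q x} :=
      { toFun := fun x => ⟨⟨FreeGroup.of i * x.1, x.2⟩, by simp [q]⟩
        invFun := fun x => ⟨⟨(FreeGroup.of i)⁻¹ * x.1, x.2⟩, by simp [p]⟩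
        left_inv := fun x => by simp
        right_inv := fun x => by simp }
    refine ⟨e.extendSubtype, fun x h => ?_⟩
    rw [Equiv.extendSubtype_apply_of_mem e x h]
    rfl
  choose σ hσ using hσ
  let f : FreeGroup α →* Equiv.Perm A := FreeGroup.lift σ
  have h1A : (1 : FreeGroup α) ∈ A := ⟨[], List.nil_suffix, FreeGroup.one_eq_mk⟩
  have key : ∀ L' : List (α × Bool), ∀ h : L' <:+ w.toWord,
      f (FreeGroup.mk L') ⟨1, h1A⟩ = ⟨FreeGroup.mk L', L', h, rfl⟩ := by
    intro L'
    induction L' with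
    | nil =>
      intro h
      have : FreeGroup.mk ([] : List (α × Bool)) = 1 := FreeGroup.one_eq_mk.symm
      simp [this]
    | cons x L' ih =>
      intro h
      have h' : L' <:+ w.toWord := (List.suffix_cons x L').trans h
      have ih := ih h'
      obtain ⟨i, b⟩ := x
      have e0 : FreeGroup.mk ((i, b) :: L') = FreeGroup.mk [(i, b)] * FreeGroup.mk L' := by
        rw [FreeGroup.mul_mk]; rfl
      cases b with
      | true =>
        have e1 : FreeGroup.mk [(i, true)] = FreeGroup.of i := rfl
        have hm : FreeGroup.of i * FreeGroup.mk L' ∈ A := ⟨_, h, by rw [e0, e1]⟩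
        have := hσ i ⟨FreeGroup.mk L', L', h', rfl⟩ hm
        have hf : f (FreeGroup.of i) = σ i := FreeGroup.lift_apply_of
        have : f (FreeGroup.mk ((i, true) :: L')) ⟨1, h1A⟩ = ⟨FreeGroup.of i * FreeGroup.mk L', hm⟩ := by
          rw [e0, map_mul, Equiv.Perm.mul_apply, ih, e1, hf, this]
        rw [this]
        apply Subtype.ext
        simp only [e0, e1]
      | false =>
        have e1 : FreeGroup.mk [(i, false)] = (FreeGroup.of i)⁻¹ := by
          simp [FreeGroup.of, FreeGroup.inv_mk, FreeGroup.invRev]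
        have hf : f (FreeGroup.of i) = σ i := FreeGroup.lift_apply_of
        have hm : FreeGroup.mk ((i, false) :: L') ∈ A := ⟨_, h, rfl⟩
        have hm' : FreeGroup.of i * FreeGroup.mk ((i, false) :: L') ∈ A :=
          ⟨L', h', by rw [e0, e1]; group⟩
        have h3 := hσ i ⟨FreeGroup.mk ((i, false) :: L'), hm⟩ hm'
        have h5 : f (FreeGroup.mk ((i, false) :: L')) = (σ i)⁻¹ * f (FreeGroup.mk L') := by
          rw [e0, map_mul, e1, map_inv, hf]
        rw [h5, Equiv.Perm.mul_apply, ih, Equiv.Perm.inv_eq_iff_eq]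
        apply Subtype.ext
        have h4 := congrArg Subtype.val h3
        simp only [e0, e1] at h4 ⊢
        rw [h4]; group
  refine ⟨f.ker, ?_, ?_⟩
  · exact Subgroup.finiteIndex_ker f
  · intro hk
    have := congrArg Subtype.val (key w.toWord List.suffix_rfl)
    simp only [FreeGroup.mk_toWord, MonoidHom.mem_ker.1 hk, Equiv.Perm.one_apply] at this
    exact hw this.symm

theorem hopfian_of_vf {G : Type*} [Group G] (hfg : Group.FG G) (F : Subgroup G)
    (hF : F.FiniteIndex) (hfree : Nonempty (IsFreeGroup F)) (ψ : G →* G)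
    (hs : Function.Surjective ψ) : Function.Injective ψ := by
  obtain ⟨_⟩ := hfree
  have hrf : Group.ResiduallyFinite G := by
    rw [Group.residuallyFinite_iff_exists_finiteIndex]
    intro g hg
    by_cases hgF : g ∈ F
    · let e := IsFreeGroup.toFreeGroup F
      obtain ⟨K, hK, hgK⟩ := freeGroup_separate (e ⟨g, hgF⟩) (by
        intro h
        rw [map_eq_one_iff e e.injective] at h
        exact hg (congrArg Subtype.val h))
      have : (K.comap e.toMonoidHom).FiniteIndex := by
        refine ⟨?_⟩
        rw [Subgroup.index_comap_of_surjective K (f := e.toMonoidHom) e.surjective]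
        exact hK.index_ne_zero
      refine ⟨(K.comap e.toMonoidHom).map F.subtype, ?_, ?_⟩
      · refine ⟨?_⟩
        rw [Subgroup.index_map_subtype]
        exact mul_ne_zero this.index_ne_zero hF.index_ne_zero
      · rintro ⟨x, hx, hxg⟩
        have : x = ⟨g, hgF⟩ := Subtype.ext hxg
        subst this
        exact hgK hx
    · exact ⟨F, hF, hgF⟩
  rw [injective_iff_map_eq_one]
  intro g hg
  by_contra hne
  obtain ⟨N, hN⟩ := Group.exists_finiteIndexNormalSubgroup_notMem g hne
  have hNn : N.toSubgroup.Normal := inferInstance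
  have hNf : N.toSubgroup.FiniteIndex := inferInstance
  let Q := G ⧸ N.toSubgroup
  have : Finite Q := inferInstance
  obtain ⟨S, hS⟩ := hfg.out
  have hfin : Finite (G →* Q) := by
    apply Finite.of_injective (fun (θ : G →* Q) (s : S) => θ s)
    intro θ θ' h
    apply MonoidHom.eq_of_eqOn_dense hS
    intro s hs
    exact congrFun h ⟨s, hs⟩
  have hinj : Function.Injective (fun θ : G →* Q => θ.comp ψ) := by
    intro θ θ' h
    ext x
    obtain ⟨y, rfl⟩ := hs x
    exact DFunLike.congr_fun h y
  obtain ⟨θ, hθ⟩ := (Finite.injective_iff_surjective.1 hinj) (QuotientGroup.mk' N.toSubgroup)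
  have := DFunLike.congr_fun hθ g
  simp only [MonoidHom.comp_apply, hg, map_one] at this
  apply hN
  exact (QuotientGroup.eq_one_iff (N := N.toSubgroup) g).1 this.symm


namespace Cut

variable {X : Type*}

/-- Coboundary. -/
def cb (r : X → X → Prop) (E : Set X) : Set (X × X) := {p | r p.1 p.2 ∧ p.1 ∈ E ∧ p.2 ∉ E}

theorem mem_cb {r : X → X → Prop} {E : Set X} {x y : X} :
    (x, y) ∈ cb r E ↔ r x y ∧ x ∈ E ∧ y ∉ E := Iff.rfl

theorem cb_compl {r : X → X → Prop} (hr : ∀ x y, r x y → r y x) (E : Set X) :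
    cb r Eᶜ = Prod.swap '' cb r E := by
  ext ⟨x, y⟩
  simp only [Set.mem_image, Prod.exists, Prod.swap_prod_mk, Prod.mk.injEq, mem_cb,
    Set.mem_compl_iff, not_not]
  constructor
  · rintro ⟨h1, h2, h3⟩; exact ⟨y, x, ⟨hr _ _ h1, h3, h2⟩, rfl, rfl⟩
  · rintro ⟨y', x', ⟨h1, h2, h3⟩, rfl, rfl⟩; exact ⟨hr _ _ h1, h3, h2⟩

theorem cb_compl_ncard {r : X → X → Prop} (hr : ∀ x y, r x y → r y x) (E : Set X) :
    (cb r Eᶜ).ncard = (cb r E).ncard := by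
  rw [cb_compl hr, Set.ncard_image_of_injective _ Prod.swap_injective]

theorem cb_compl_finite {r : X → X → Prop} (hr : ∀ x y, r x y → r y x) {E : Set X}
    (h : (cb r E).Finite) : (cb r Eᶜ).Finite := by
  rw [cb_compl hr]; exact h.image _

theorem cb_inter_finite {r : X → X → Prop} {E F : Set X} (hE : (cb r E).Finite)
    (hF : (cb r F).Finite) : (cb r (E ∩ F)).Finite := by
  refine (hE.union hF).subset ?_
  rintro ⟨x, y⟩ ⟨h1, ⟨h2, h3⟩, h4⟩
  by_cases hy : y ∈ E
  · right; exact ⟨h1, h3, fun h => h4 ⟨hy, h⟩⟩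
  · left; exact ⟨h1, h2, hy⟩

theorem submod {r : X → X → Prop} (hr : ∀ x y, r x y → r y x) {E F : Set X}
    (hE : (cb r E).Finite) (hF : (cb r F).Finite) :
    (cb r (E ∩ F)).ncard + (cb r (Eᶜ ∩ Fᶜ)).ncard ≤ (cb r E).ncard + (cb r F).ncard := by
  have e : Eᶜ ∩ Fᶜ = (E ∪ F)ᶜ := by rw [Set.compl_union]
  rw [e, cb_compl_ncard hr]
  have h1 : cb r (E ∩ F) ∪ cb r (E ∪ F) ⊆ cb r E ∪ cb r F := by
    rintro ⟨x, y⟩ h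
    simp only [Set.mem_union, mem_cb, Set.mem_inter_iff] at h ⊢
    tauto
  have h2 : cb r (E ∩ F) ∩ cb r (E ∪ F) ⊆ cb r E ∩ cb r F := by
    rintro ⟨x, y⟩ h
    simp only [Set.mem_union, mem_cb, Set.mem_inter_iff] at h ⊢
    tauto
  have hU : (cb r (E ∪ F)).Finite := (hE.union hF).subset (Set.subset_union_right.trans h1)
  have hI : (cb r (E ∩ F)).Finite := cb_inter_finite hE hF
  rw [← Set.ncard_union_add_ncard_inter _ _ hI hU, ← Set.ncard_union_add_ncard_inter _ _ hE hF]
  exact add_le_add (Set.ncard_le_ncard h1 (hE.union hF))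
    (Set.ncard_le_ncard h2 (hE.subset Set.inter_subset_left))

/-- Connectedness of a set of vertices. -/
def Conn (r : X → X → Prop) (E : Set X) : Prop :=
  ∀ A ⊆ E, A.Nonempty → (∀ x ∈ A, ∀ y ∈ E, r x y → y ∈ A) → A = E

/-- Tight sets with small coboundary. -/
def Good (r : X → X → Prop) (k : ℕ) (E : Set X) : Prop :=
  Conn r E ∧ Conn r Eᶜ ∧ (cb r E).Finite ∧ (cb r E).ncard ≤ k

theorem good_compl {r : X → X → Prop} (hr : ∀ x y, r x y → r y x) {k : ℕ} {E : Set X}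
    (h : Good r k E) : Good r k Eᶜ := by
  refine ⟨h.2.1, ?_, cb_compl_finite hr h.2.2.1, ?_⟩
  · rw [_root_.compl_compl]; exact h.1
  · rw [cb_compl_ncard hr]; exact h.2.2.2

theorem finite_reach {r : X → X → Prop} {k : ℕ}
    (h : ∀ x y, r x y → {E | Good r k E ∧ x ∈ E ∧ y ∉ E}.Finite) {x y : X}
    (hxy : Relation.ReflTransGen r x y) : {E | Good r k E ∧ x ∈ E ∧ y ∉ E}.Finite := by
  induction hxy with
  | refl =>
    convert Set.finite_empty
    ext E
    simp only [Set.mem_ofPred_eq, Set.mem_empty_iff_false, iff_false]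
    tauto
  | @tail b c _ hbc ih =>
    refine (ih.union (h b c hbc)).subset ?_
    rintro E ⟨h1, h2, h3⟩
    by_cases hb : b ∈ E
    · right; exact ⟨h1, hb, h3⟩
    · left; exact ⟨h1, h2, hb⟩

theorem finite_edge (k : ℕ) : ∀ (r : X → X → Prop), (∀ x y, r x y → r y x) → ∀ x y, r x y →
    {E | Good r k E ∧ x ∈ E ∧ y ∉ E}.Finite := by
  induction k with
  | zero =>
    intro r hr x y hxy
    convert Set.finite_empty
    ext E
    simp only [Set.mem_ofPred_eq, Set.mem_empty_iff_false, iff_false]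
    rintro ⟨⟨_, _, h1, h2⟩, hx, hy⟩
    have : cb r E = ∅ := by
      rw [← Set.ncard_eq_zero h1]; omega
    have h3 : (x, y) ∈ cb r E := ⟨hxy, hx, hy⟩
    rw [this] at h3
    exact h3
  | succ k ih =>
    intro r hr x y hxy
    let r' : X → X → Prop := fun p q => r p q ∧ ¬ (p = x ∧ q = y) ∧ ¬ (p = y ∧ q = x)
    have hr' : ∀ p q, r' p q → r' q p := by
      rintro p q ⟨h1, h2, h3⟩
      exact ⟨hr _ _ h1, fun h => h3 ⟨h.2, h.1⟩, fun h => h2 ⟨h.2, h.1⟩⟩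
    have hgood : ∀ E, Good r (k + 1) E → x ∈ E → y ∉ E → Good r' k E := by
      rintro E ⟨h1, h2, h3, h4⟩ hx hy
      have hsub : cb r' E ⊂ cb r E := by
        rw [Set.ssubset_iff_of_subset]
        · exact ⟨(x, y), ⟨hxy, hx, hy⟩, fun h => h.1.2.1 ⟨rfl, rfl⟩⟩
        · rintro p ⟨hp, hp'⟩; exact ⟨hp.1, hp'⟩
      refine ⟨?_, ?_, h3.subset hsub.1, ?_⟩
      · intro A hA hne hcl
        refine h1 A hA hne (fun p hp q hq hpq => hcl p hp q hq ⟨hpq, ?_, ?_⟩)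
        · rintro ⟨_, rfl⟩; exact hy hq
        · rintro ⟨rfl, _⟩; exact hy (hA hp)
      · intro A hA hne hcl
        refine h2 A hA hne (fun p hp q hq hpq => hcl p hp q hq ⟨hpq, ?_, ?_⟩)
        · rintro ⟨rfl, _⟩; exact (hA hp) hx
        · rintro ⟨_, rfl⟩; exact hq hx
      · have := Set.ncard_lt_ncard hsub h3
        omega
    by_cases hreach : Relation.ReflTransGen r' x y
    · refine (finite_reach (ih r' hr') hreach).subset ?_
      rintro E ⟨h1, h2, h3⟩
      exact ⟨hgood E h1 h2 h3, h2, h3⟩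
    · refine (Set.finite_singleton {p | Relation.ReflTransGen r' x p}).subset ?_
      rintro E ⟨h1, h2, h3⟩
      have hg := hgood E h1 h2 h3
      have e1 := hg.1 {p | p ∈ E ∧ Relation.ReflTransGen r' x p} (fun p hp => hp.1)
        ⟨x, h2, Relation.ReflTransGen.refl⟩
        (fun p hp q hq hpq => ⟨hq, hp.2.tail hpq⟩)
      have e2 := hg.2.1 {p | p ∈ Eᶜ ∧ Relation.ReflTransGen r' p y} (fun p hp => hp.1)
        ⟨y, h3, Relation.ReflTransGen.refl⟩
        (fun p hp q hq hpq => ⟨hq, hp.2.head (hr' _ _ hpq)⟩)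
      rw [Set.mem_singleton_iff]
      ext p
      constructor
      · intro hp
        rw [← e1] at hp
        exact hp.2
      · intro hp
        by_contra hpE
        have : p ∈ Eᶜ := hpE
        rw [← e2] at this
        exact hreach (Relation.ReflTransGen.trans hp this.2)

theorem finite_sep {r : X → X → Prop} (hr : ∀ x y, r x y → r y x)
    (hc : ∀ x y, Relation.ReflTransGen r x y) (k : ℕ) (x y : X) :
    {E | Good r k E ∧ x ∈ E ∧ y ∉ E}.Finite :=
  finite_reach (finite_edge k r hr) (hc x y)

/-- Crossing sets. -/
def Cross (E F : Set X) : Prop :=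
  (E ∩ F).Nonempty ∧ (E ∩ Fᶜ).Nonempty ∧ (Eᶜ ∩ F).Nonempty ∧ (Eᶜ ∩ Fᶜ).Nonempty

theorem Cross.symm {E F : Set X} (h : Cross E F) : Cross F E := by
  obtain ⟨h1, h2, h3, h4⟩ := h
  refine ⟨?_, ?_, ?_, ?_⟩ <;> rw [Set.inter_comm] <;> assumption

theorem Cross.compl_left {E F : Set X} (h : Cross E F) : Cross Eᶜ F := by
  obtain ⟨h1, h2, h3, h4⟩ := h
  refine ⟨h3, h4, ?_, ?_⟩ <;> rw [_root_.compl_compl] <;> assumption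

theorem Cross.compl_right {E F : Set X} (h : Cross E F) : Cross E Fᶜ := h.symm.compl_left.symm

theorem exists_edge {r : X → X → Prop} {D E : Set X} (hD : Conn r D) (h1 : (E ∩ D).Nonempty)
    (h2 : (Eᶜ ∩ D).Nonempty) : ∃ p ∈ cb r E, p.1 ∈ D := by
  by_contra hc
  push Not at hc
  have := hD (E ∩ D) Set.inter_subset_right h1 (by
    rintro x ⟨hx1, hx2⟩ y hy hxy
    refine ⟨?_, hy⟩
    by_contra hyE
    exact hc (x, y) ⟨hxy, hx1, hyE⟩ hx2)
  obtain ⟨z, hz1, hz2⟩ := h2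
  rw [← this] at hz2
  exact hz1 hz2.1

theorem finite_cross {r : X → X → Prop} (hr : ∀ x y, r x y → r y x)
    (hc : ∀ x y, Relation.ReflTransGen r x y) (k : ℕ) {E : Set X} (hE : (cb r E).Finite) :
    {D | Good r k D ∧ Cross E D}.Finite := by
  have : (⋃ p ∈ cb r E, ⋃ q ∈ cb r E, {D | Good r k D ∧ p.1 ∈ D ∧ q.1 ∉ D}).Finite :=
    hE.biUnion (fun p _ => hE.biUnion (fun q _ => finite_sep hr hc k p.1 q.1))
  refine this.subset ?_
  rintro D ⟨hD, hX⟩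
  obtain ⟨p, hp, hpD⟩ := exists_edge hD.1 hX.1 hX.2.2.1
  obtain ⟨q, hq, hqD⟩ := exists_edge hD.2.1 hX.2.1 hX.2.2.2
  simp only [Set.mem_iUnion]
  exact ⟨p, hp, q, hq, hD, hpD, hqD⟩

/-- `E` splits the pair of filters. -/
def Spl (r : X → X → Prop) (α : Filter X × Filter X) (E : Set X) : Prop :=
  (cb r E).Finite ∧ ((E ∈ α.1 ∧ Eᶜ ∈ α.2) ∨ (E ∈ α.2 ∧ Eᶜ ∈ α.1))

/-- Minimal splitting sets. -/
def Min (r : X → X → Prop) (α : Filter X × Filter X) (E : Set X) : Prop :=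
  Spl r α E ∧ ∀ F, Spl r α F → (cb r E).ncard ≤ (cb r F).ncard

theorem Spl.compl {r : X → X → Prop} (hr : ∀ x y, r x y → r y x) {α : Filter X × Filter X}
    {E : Set X} (h : Spl r α E) : Spl r α Eᶜ := by
  refine ⟨cb_compl_finite hr h.1, ?_⟩
  rw [_root_.compl_compl]
  have := h.2
  tauto

theorem Min.compl {r : X → X → Prop} (hr : ∀ x y, r x y → r y x) {α : Filter X × Filter X}
    {E : Set X} (h : Min r α E) : Min r α Eᶜ := by
  refine ⟨h.1.compl hr, ?_⟩
  rw [cb_compl_ncard hr]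
  exact h.2

theorem cb_nonempty {r : X → X → Prop} (hc : ∀ x y, Relation.ReflTransGen r x y) {E : Set X}
    {x y : X} (hx : x ∈ E) (hy : y ∉ E) : (cb r E).Nonempty := by
  by_contra hne
  have : ∀ z, Relation.ReflTransGen r x z → z ∈ E := by
    intro z hz
    induction hz with
    | refl => exact hx
    | @tail b c _ hbc ih =>
      by_contra hcE
      exact hne ⟨(b, c), hbc, ih, hcE⟩
  exact hy (this y (hc x y))

/-- The hypotheses on a family of pairs of filters. -/
structure Hyp (r : X → X → Prop) (A : Set (Filter X × Filter X)) (K : ℕ) : Prop where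
  symm : ∀ x y, r x y → r y x
  conn : ∀ x y, Relation.ReflTransGen r x y
  ne : ∀ α ∈ A, α.1.NeBot ∧ α.2.NeBot
  dich : ∀ α ∈ A, ∀ E, (cb r E).Finite → (E ∈ α.1 ∨ Eᶜ ∈ α.1) ∧ (E ∈ α.2 ∨ Eᶜ ∈ α.2)
  bound : ∀ α ∈ A, ∃ E, Spl r α E ∧ (cb r E).ncard ≤ K

variable {r : X → X → Prop} {A : Set (Filter X × Filter X)} {K : ℕ}

theorem Hyp.nonempty (H : Hyp r A K) {α : Filter X × Filter X} (hα : α ∈ A) {E : Set X}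
    (h : Spl r α E) : E.Nonempty := by
  obtain ⟨h1, h2⟩ := H.ne α hα
  rcases h.2 with h | h
  · exact Filter.nonempty_of_mem h.1
  · exact Filter.nonempty_of_mem h.1

theorem Hyp.corner (H : Hyp r A K) {α : Filter X × Filter X} (hα : α ∈ A) {C D : Set X}
    (h : Spl r α C) (hD : (cb r D).Finite) : Spl r α (C ∩ D) ∨ Spl r α (C ∩ Dᶜ) := by
  have hd := H.dich α hα D hD
  have f1 := cb_inter_finite h.1 hD
  have f2 := cb_inter_finite h.1 (cb_compl_finite H.symm hD)
  have s1 : Cᶜ ⊆ (C ∩ D)ᶜ := Set.compl_subset_compl.2 Set.inter_subset_left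
  have s2 : Cᶜ ⊆ (C ∩ Dᶜ)ᶜ := Set.compl_subset_compl.2 Set.inter_subset_left
  rcases h.2 with ⟨h1, h2⟩ | ⟨h1, h2⟩
  · rcases hd.1 with h3 | h3
    · exact Or.inl ⟨f1, Or.inl ⟨Filter.inter_mem h1 h3, Filter.mem_of_superset h2 s1⟩⟩
    · exact Or.inr ⟨f2, Or.inl ⟨Filter.inter_mem h1 h3, Filter.mem_of_superset h2 s2⟩⟩
  · rcases hd.2 with h3 | h3
    · exact Or.inl ⟨f1, Or.inr ⟨Filter.inter_mem h1 h3, Filter.mem_of_superset h2 s1⟩⟩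
    · exact Or.inr ⟨f2, Or.inr ⟨Filter.inter_mem h1 h3, Filter.mem_of_superset h2 s2⟩⟩

theorem Hyp.min_conn (H : Hyp r A K) {α : Filter X × Filter X} (hα : α ∈ A) {E : Set X}
    (h : Min r α E) : Conn r E := by
  intro B hB hne hcl
  by_contra hBE
  obtain ⟨z, hzE, hzB⟩ : ∃ z ∈ E, z ∉ B := by
    by_contra hc
    push Not at hc
    exact hBE (Set.Subset.antisymm hB hc)
  obtain ⟨w, hw⟩ := H.nonempty hα (h.1.compl H.symm)
  obtain ⟨b, hb⟩ := hne
  have c1 : cb r B ⊆ cb r E := by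
    rintro ⟨x, y⟩ ⟨h1, h2, h3⟩
    exact ⟨h1, hB h2, fun hy => h3 (hcl x h2 y hy h1)⟩
  have c2 : cb r (E ∩ Bᶜ) ⊆ cb r E := by
    rintro ⟨x, y⟩ ⟨h1, h2, h3⟩
    refine ⟨h1, h2.1, fun hy => h3 ⟨hy, fun hyB => h2.2 (hcl y hyB x h2.1 (H.symm _ _ h1))⟩⟩
  have n1 : (cb r B).Nonempty := cb_nonempty H.conn hb hzB
  have n2 : (cb r (E ∩ Bᶜ)).Nonempty := cb_nonempty H.conn (x := z) (y := w) ⟨hzE, hzB⟩ (fun h => hw h.1)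
  have dis : ∀ p, p ∈ cb r B → p ∈ cb r (E ∩ Bᶜ) → False := fun p h1 h2 => h2.2.1.2 h1.2.1
  have hfB : (cb r B).Finite := h.1.1.subset c1
  have e : E ∩ B = B := Set.inter_eq_right.2 hB
  rcases H.corner hα h.1 hfB with hs | hs
  · rw [e] at hs
    have h1 := h.2 _ hs
    have := Set.eq_of_subset_of_ncard_le c1 h1 h.1.1
    obtain ⟨p, hp⟩ := n2
    exact dis p (this ▸ c2 hp) hp
  · have h1 := h.2 _ hs
    have := Set.eq_of_subset_of_ncard_le c2 h1 h.1.1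
    obtain ⟨p, hp⟩ := n1
    exact dis p hp (this ▸ c1 hp)

theorem Hyp.min_good (H : Hyp r A K) {α : Filter X × Filter X} (hα : α ∈ A) {E : Set X}
    (h : Min r α E) : Good r K E := by
  refine ⟨H.min_conn hα h, H.min_conn hα (h.compl H.symm), h.1.1, ?_⟩
  obtain ⟨F, h1, h2⟩ := H.bound α hα
  exact (h.2 F h1).trans h2

/-- Minimal cuts crossing `E`. -/
def XX (r : X → X → Prop) (A : Set (Filter X × Filter X)) (E : Set X) : Set (Set X) :=
  {B | (∃ α ∈ A, Min r α B) ∧ Cross E B}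

theorem Hyp.XX_finite (H : Hyp r A K) {E : Set X} (hE : (cb r E).Finite) :
    (XX r A E).Finite := by
  refine (finite_cross H.symm H.conn K hE).subset ?_
  rintro B ⟨⟨α, hα, hB⟩, hX⟩
  exact ⟨H.min_good hα hB, hX⟩

theorem XX_compl (E : Set X) : XX r A Eᶜ = XX r A E := by
  ext B
  constructor
  · rintro ⟨h1, h2⟩; refine ⟨h1, ?_⟩; have := h2.compl_left; rwa [_root_.compl_compl] at this
  · rintro ⟨h1, h2⟩; exact ⟨h1, h2.compl_left⟩

/-- Optimal cuts. -/
def Opt (r : X → X → Prop) (A : Set (Filter X × Filter X)) (α : Filter X × Filter X)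
    (E : Set X) : Prop :=
  Min r α E ∧ ∀ F, Min r α F → (XX r A E).ncard ≤ (XX r A F).ncard

theorem Opt.compl (hr : ∀ x y, r x y → r y x) {α : Filter X × Filter X}
    {E : Set X} (h : Opt r A α E) : Opt r A α Eᶜ := by
  refine ⟨h.1.compl hr, ?_⟩
  rw [XX_compl]
  exact h.2

theorem Hyp.exists_opt (H : Hyp r A K) {α : Filter X × Filter X} (hα : α ∈ A) :
    ∃ E, Opt r A α E := by
  obtain ⟨E, hE, _⟩ := H.bound α hα
  obtain ⟨F, hF, hmin⟩ := exists_minimalFor_of_wellFoundedLT (fun F => Spl r α F)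
    (fun F => (cb r F).ncard) ⟨E, hE⟩
  have hM : Min r α F := ⟨hF, fun D hD => by
    by_contra hc
    push Not at hc
    exact absurd (hmin hD hc.le) (not_le.2 hc)⟩
  obtain ⟨F', hF', hmin'⟩ := exists_minimalFor_of_wellFoundedLT (fun F => Min r α F)
    (fun F => (XX r A F).ncard) ⟨F, hM⟩
  exact ⟨F', hF', fun D hD => by
    by_contra hc
    push Not at hc
    exact absurd (hmin' hD hc.le) (not_le.2 hc)⟩

theorem cross_corner {B C D : Set X} (hCD : Cross C D) (h : Cross (C ∩ D) B) :
    Cross C B ∨ Cross D B := by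
  obtain ⟨⟨x, ⟨hx1, hx2⟩, hx3⟩, ⟨y, ⟨hy1, hy2⟩, hy3⟩, ⟨u, hu1, hu2⟩, t, ht1, ht2⟩ := h
  obtain ⟨q, hq1, hq2⟩ := hCD.2.2.2
  by_contra hc
  push Not at hc
  obtain ⟨n1, n2⟩ := hc
  have m1 : ¬ ((Cᶜ ∩ B).Nonempty ∧ (Cᶜ ∩ Bᶜ).Nonempty) := fun h =>
    n1 ⟨⟨x, hx1, hx3⟩, ⟨y, hy1, hy3⟩, h.1, h.2⟩
  have m2 : ¬ ((Dᶜ ∩ B).Nonempty ∧ (Dᶜ ∩ Bᶜ).Nonempty) := fun h =>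
    n2 ⟨⟨x, hx2, hx3⟩, ⟨y, hy2, hy3⟩, h.1, h.2⟩
  have hu : u ∉ C ∨ u ∉ D := by
    by_contra hc; push Not at hc; exact hu1 hc
  have ht : t ∉ C ∨ t ∉ D := by
    by_contra hc; push Not at hc; exact ht1 hc
  by_cases hqB : q ∈ B
  · rcases ht with ht | ht
    · exact m1 ⟨⟨q, hq1, hqB⟩, ⟨t, ht, ht2⟩⟩
    · exact m2 ⟨⟨q, hq2, hqB⟩, ⟨t, ht, ht2⟩⟩
  · rcases hu with hu | hu
    · exact m1 ⟨⟨u, hu, hu2⟩, ⟨q, hq1, hqB⟩⟩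
    · exact m2 ⟨⟨u, hu, hu2⟩, ⟨q, hq2, hqB⟩⟩

theorem Hyp.XX_lt (H : Hyp r A K) {C D : Set X} (hC : (cb r C).Finite) (hD : (cb r D).Finite)
    (hCD : Cross C D) (hDA : ∃ α ∈ A, Min r α D) :
    (XX r A (C ∩ D)).ncard + (XX r A (Cᶜ ∩ Dᶜ)).ncard < (XX r A C).ncard + (XX r A D).ncard := by
  have h1 : XX r A (C ∩ D) ∪ XX r A (Cᶜ ∩ Dᶜ) ⊂ XX r A C ∪ XX r A D := by
    rw [Set.ssubset_iff_of_subset]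
    · refine ⟨D, Or.inl ⟨hDA, hCD⟩, ?_⟩
      rintro (h | h)
      · obtain ⟨x, hx1, hx2⟩ := h.2.2.1
        exact hx2 hx1.2
      · obtain ⟨x, hx1, hx2⟩ := h.2.1
        exact hx1.2 hx2
    · rintro B (⟨hB, h⟩ | ⟨hB, h⟩)
      · rcases cross_corner hCD h with h | h
        · exact Or.inl ⟨hB, h⟩
        · exact Or.inr ⟨hB, h⟩
      · rcases cross_corner hCD.compl_left.compl_right h with h | h
        · left; have := h.compl_left; rw [_root_.compl_compl] at this; exact ⟨hB, this⟩
        · right; have := h.compl_left; rw [_root_.compl_compl] at this; exact ⟨hB, this⟩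
  have h2 : XX r A (C ∩ D) ∩ XX r A (Cᶜ ∩ Dᶜ) ⊆ XX r A C ∩ XX r A D := by
    rintro B ⟨⟨hB, g1, g2, _, _⟩, ⟨_, g3, g4, _, _⟩⟩
    have i1 : C ∩ D ⊆ C := Set.inter_subset_left
    have i2 : C ∩ D ⊆ D := Set.inter_subset_right
    have i3 : Cᶜ ∩ Dᶜ ⊆ Cᶜ := Set.inter_subset_left
    have i4 : Cᶜ ∩ Dᶜ ⊆ Dᶜ := Set.inter_subset_right
    have mono : ∀ {U W S : Set X}, U ⊆ W → (U ∩ S).Nonempty → (W ∩ S).Nonempty :=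
      fun h h' => h'.mono (Set.inter_subset_inter_left _ h)
    exact ⟨⟨hB, mono i1 g1, mono i1 g2, mono i3 g3, mono i3 g4⟩,
      ⟨hB, mono i2 g1, mono i2 g2, mono i4 g3, mono i4 g4⟩⟩
  have f1 := H.XX_finite hC
  have f2 := H.XX_finite hD
  have f3 := H.XX_finite (cb_inter_finite hC hD)
  have f4 := H.XX_finite (cb_inter_finite (cb_compl_finite H.symm hC) (cb_compl_finite H.symm hD))
  rw [← Set.ncard_union_add_ncard_inter _ _ f1 f2, ← Set.ncard_union_add_ncard_inter _ _ f3 f4]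
  exact add_lt_add_of_lt_of_le (Set.ncard_lt_ncard h1 (f1.union f2))
    (Set.ncard_le_ncard h2 (f1.subset Set.inter_subset_left))

theorem Hyp.L1 (H : Hyp r A K) {α β : Filter X × Filter X} (hβ : β ∈ A)
    {C D : Set X} (hC : Opt r A α C) (hD : Opt r A β D) (hX : Cross C D)
    (h1 : Spl r α (C ∩ D)) (h2 : Spl r β (Cᶜ ∩ Dᶜ)) : False := by
  have s := submod H.symm hC.1.1.1 hD.1.1.1
  have a1 := hC.1.2 _ h1
  have a2 := hD.1.2 _ h2
  have m1 : Min r α (C ∩ D) := ⟨h1, fun F hF => by have := hC.1.2 F hF; omega⟩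
  have m2 : Min r β (Cᶜ ∩ Dᶜ) := ⟨h2, fun F hF => by have := hD.1.2 F hF; omega⟩
  have := H.XX_lt hC.1.1.1 hD.1.1.1 hX ⟨β, hβ, hD.1⟩
  have b1 := hC.2 _ m1
  have b2 := hD.2 _ m2
  omega

theorem Hyp.L2 (H : Hyp r A K) {α β : Filter X × Filter X} (hβ : β ∈ A)
    {C D : Set X} (hC : Opt r A α C) (hD : Opt r A β D) (hX : Cross C D)
    (h1 : Spl r α (C ∩ D)) (h2 : Spl r α (Cᶜ ∩ Dᶜ)) (h3 : Spl r β (C ∩ Dᶜ))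
    (h4 : Spl r β (Cᶜ ∩ D)) : False := by
  have s := submod H.symm hC.1.1.1 hD.1.1.1
  have s' := submod H.symm hC.1.1.1 (cb_compl_finite H.symm hD.1.1.1)
  rw [_root_.compl_compl, cb_compl_ncard H.symm D] at s'
  have a1 := hC.1.2 _ h1
  have a2 := hC.1.2 _ h2
  have a3 := hD.1.2 _ h3
  have a4 := hD.1.2 _ h4
  have m1 : Min r α (C ∩ D) := ⟨h1, fun F hF => by have := hC.1.2 F hF; omega⟩
  have m2 : Min r α (Cᶜ ∩ Dᶜ) := ⟨h2, fun F hF => by have := hC.1.2 F hF; omega⟩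
  have m3 : Min r β (C ∩ Dᶜ) := ⟨h3, fun F hF => by have := hD.1.2 F hF; omega⟩
  have m4 : Min r β (Cᶜ ∩ D) := ⟨h4, fun F hF => by have := hD.1.2 F hF; omega⟩
  have t1 := H.XX_lt hC.1.1.1 hD.1.1.1 hX ⟨β, hβ, hD.1⟩
  have t2 := H.XX_lt hC.1.1.1 (cb_compl_finite H.symm hD.1.1.1) hX.compl_right
    ⟨β, hβ, hD.1.compl H.symm⟩
  rw [_root_.compl_compl, XX_compl D] at t2
  have b1 := hC.2 _ m1
  have b2 := hC.2 _ m2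
  have b3 := hD.2 _ m3
  have b4 := hD.2 _ m4
  omega

theorem Hyp.nested (H : Hyp r A K) {α β : Filter X × Filter X} (hα : α ∈ A) (hβ : β ∈ A)
    {C D : Set X} (hC : Opt r A α C) (hD : Opt r A β D) : ¬ Cross C D := by
  intro hX
  have hC' := hC.compl H.symm
  have hD' := hD.compl H.symm
  have c1 := H.corner hα hC.1.1 hD.1.1.1
  have c2 := H.corner hα hC'.1.1 hD.1.1.1
  have c3 := H.corner hβ hD.1.1 hC.1.1.1
  have c4 := H.corner hβ hD'.1.1 hC.1.1.1
  rw [Set.inter_comm D, Set.inter_comm D] at c3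
  rw [Set.inter_comm Dᶜ, Set.inter_comm Dᶜ] at c4
  have l1 := H.L1 hβ hC hD hX
  have l2 := H.L1 hβ hC hD' hX.compl_right
  have l3 := H.L1 hβ hC' hD hX.compl_left
  have l4 := H.L1 hβ hC' hD' hX.compl_left.compl_right
  have k1 := H.L2 hβ hC hD hX
  have k2 := H.L2 hβ hC hD' hX.compl_right
  simp only [_root_.compl_compl] at l1 l2 l3 l4 k1 k2
  tauto

theorem cross_preimage (σ : Equiv.Perm X) (E F : Set X) :
    Cross (σ ⁻¹' E) (σ ⁻¹' F) ↔ Cross E F := by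
  have : ∀ S : Set X, (σ ⁻¹' S).Nonempty ↔ S.Nonempty := by
    intro S
    constructor
    · rintro ⟨x, hx⟩; exact ⟨σ x, hx⟩
    · rintro ⟨x, hx⟩; refine ⟨σ.symm x, ?_⟩; simpa using hx
  simp only [Cross, ← Set.preimage_compl, ← Set.preimage_inter, this]

/-- A symmetry of the situation. -/
structure Sym (r : X → X → Prop) (A : Set (Filter X × Filter X)) (σ : Equiv.Perm X) : Prop where
  rel : ∀ x y, r (σ x) (σ y) ↔ r x y
  map : ∀ α ∈ A, (Filter.map σ α.1, Filter.map σ α.2) ∈ A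

theorem cb_preimage {σ : Equiv.Perm X} (hσ : ∀ x y, r (σ x) (σ y) ↔ r x y) (E : Set X) :
    cb r (σ ⁻¹' E) = (Equiv.prodCongr σ σ) ⁻¹' cb r E := by
  ext ⟨x, y⟩
  simp only [mem_cb, Set.mem_preimage, Equiv.prodCongr_apply, Prod.map_apply, hσ]

theorem cb_preimage_ncard {σ : Equiv.Perm X} (hσ : ∀ x y, r (σ x) (σ y) ↔ r x y) (E : Set X) :
    (cb r (σ ⁻¹' E)).ncard = (cb r E).ncard := by
  rw [cb_preimage hσ, ← Equiv.image_symm_eq_preimage, Set.ncard_image_of_injective _ (Equiv.injective _)]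

theorem spl_preimage {σ : Equiv.Perm X} (hσ : ∀ x y, r (σ x) (σ y) ↔ r x y)
    (α : Filter X × Filter X) (E : Set X) :
    Spl r (Filter.map σ α.1, Filter.map σ α.2) E ↔ Spl r α (σ ⁻¹' E) := by
  have : (cb r (σ ⁻¹' E)).Finite ↔ (cb r E).Finite := by
    rw [cb_preimage hσ, ← Equiv.image_symm_eq_preimage, Set.finite_image_iff (Equiv.injective _).injOn]
  simp only [Spl, this, Filter.mem_map, Set.preimage_compl]

theorem min_preimage {σ : Equiv.Perm X} (hσ : ∀ x y, r (σ x) (σ y) ↔ r x y)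
    (α : Filter X × Filter X) (E : Set X) :
    Min r (Filter.map σ α.1, Filter.map σ α.2) E ↔ Min r α (σ ⁻¹' E) := by
  simp only [Min, spl_preimage hσ, cb_preimage_ncard hσ]
  refine and_congr_right fun _ => ⟨fun h F hF => ?_, fun h F hF => ?_⟩
  · have e : F = σ ⁻¹' (σ.symm ⁻¹' F) := by ext x; simp
    rw [e] at hF ⊢
    rw [cb_preimage_ncard hσ]
    exact h _ hF
  · have := h _ hF
    rwa [cb_preimage_ncard hσ] at this

theorem exists_min_preimage {σ : Equiv.Perm X} (h1 : Sym r A σ) (h2 : Sym r A σ.symm)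
    (E : Set X) : (∃ α ∈ A, Min r α (σ ⁻¹' E)) ↔ ∃ α ∈ A, Min r α E := by
  constructor
  · rintro ⟨α, hα, h⟩
    exact ⟨_, h1.map α hα, (min_preimage h1.rel α E).2 h⟩
  · rintro ⟨α, hα, h⟩
    refine ⟨_, h2.map α hα, ?_⟩
    rw [← min_preimage h1.rel]
    simpa [Filter.map_map] using h

theorem XX_preimage {σ : Equiv.Perm X} (h1 : Sym r A σ) (h2 : Sym r A σ.symm)
    (E : Set X) : (XX r A (σ ⁻¹' E)).ncard = (XX r A E).ncard := by
  have : XX r A (σ ⁻¹' E) = (fun B => σ ⁻¹' B) '' XX r A E := by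
    ext B
    constructor
    · rintro ⟨g1, g2⟩
      have e : B = σ ⁻¹' (σ.symm ⁻¹' B) := by ext x; simp
      refine ⟨σ.symm ⁻¹' B, ⟨?_, ?_⟩, e.symm⟩
      · rw [← exists_min_preimage h1 h2, ← e]; exact g1
      · rw [← cross_preimage σ, ← e]; exact g2
    · rintro ⟨B, ⟨g1, g2⟩, rfl⟩
      exact ⟨(exists_min_preimage h1 h2 B).2 g1, (cross_preimage σ _ _).2 g2⟩
  rw [this, Set.ncard_image_of_injective]
  exact σ.surjective.preimage_injective

theorem opt_preimage {σ : Equiv.Perm X} (h1 : Sym r A σ) (h2 : Sym r A σ.symm)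
    (α : Filter X × Filter X) (E : Set X) :
    Opt r A (Filter.map σ α.1, Filter.map σ α.2) E ↔ Opt r A α (σ ⁻¹' E) := by
  simp only [Opt, min_preimage h1.rel, XX_preimage h1 h2]
  refine and_congr_right fun _ => ⟨fun h F hF => ?_, fun h F hF => ?_⟩
  · have e : F = σ ⁻¹' (σ.symm ⁻¹' F) := by ext x; simp
    rw [e] at hF ⊢
    rw [XX_preimage h1 h2]
    exact h _ hF
  · have := h _ hF
    rwa [XX_preimage h1 h2] at this

/-- The nested family of cuts. -/
theorem Hyp.family (H : Hyp r A K) : ∃ 𝓔 : Set (Set X),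
    (∀ E ∈ 𝓔, Eᶜ ∈ 𝓔) ∧ (∀ E ∈ 𝓔, E.Nonempty) ∧ (∀ E ∈ 𝓔, ∀ F ∈ 𝓔, ¬ Cross E F) ∧
    (∀ x y, {E | E ∈ 𝓔 ∧ x ∈ E ∧ y ∉ E}.Finite) ∧
    (∀ α ∈ A, ∃ E ∈ 𝓔, Spl r α E) ∧
    (∀ σ : Equiv.Perm X, Sym r A σ → Sym r A σ.symm → ∀ E ∈ 𝓔, σ ⁻¹' E ∈ 𝓔) := by
  refine ⟨{E | ∃ α ∈ A, Opt r A α E}, ?_, ?_, ?_, ?_, ?_, ?_⟩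
  · rintro E ⟨α, hα, h⟩; exact ⟨α, hα, h.compl H.symm⟩
  · rintro E ⟨α, hα, h⟩; exact H.nonempty hα h.1.1
  · rintro E ⟨α, hα, h⟩ F ⟨β, hβ, h'⟩; exact H.nested hα hβ h h'
  · intro x y
    refine (finite_sep H.symm H.conn K x y).subset ?_
    rintro E ⟨⟨α, hα, h⟩, h'⟩
    exact ⟨H.min_good hα h.1, h'⟩
  · intro α hα
    obtain ⟨E, hE⟩ := H.exists_opt hα
    exact ⟨E, ⟨α, hα, hE⟩, hE.1.1⟩
  · rintro σ h1 h2 E ⟨α, hα, h⟩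
    refine ⟨_, h2.map α hα, ?_⟩
    rw [← opt_preimage h1 h2]
    simpa [Filter.map_map] using h

end Cut


open scoped Pointwise

/-- An invariant nested family of subsets of the group. -/
structure Fam (G : Type*) [Group G] where
  E : Set (Set G)
  compl : ∀ A ∈ E, Aᶜ ∈ E
  ne : ∀ A ∈ E, A.Nonempty
  nest : ∀ A ∈ E, ∀ B ∈ E, ¬ Cut.Cross A B
  fin : ∀ x y, {A | A ∈ E ∧ x ∈ A ∧ y ∉ A}.Finite
  inv : ∀ (g : G), ∀ A ∈ E, g • A ∈ E

namespace Fam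

variable {G : Type*} [Group G] (𝓕 : Fam G)

/-- Oriented edges. -/
def P : Type _ := {p : Set G × Bool // p.1 ∈ 𝓕.E}

variable {𝓕}

/-- The underlying set. -/
def P.s (a : 𝓕.P) : Set G := a.1.1

/-- The underlying bool. -/
def P.b (a : 𝓕.P) : Bool := a.1.2

theorem P.mem (a : 𝓕.P) : a.s ∈ 𝓕.E := a.2

theorem P.ext' {a b : 𝓕.P} (h1 : a.s = b.s) (h2 : a.b = b.b) : a = b :=
  Subtype.ext (Prod.ext h1 h2)

/-- Orientation reversal. -/
def P.c (a : 𝓕.P) : 𝓕.P := ⟨(a.sᶜ, !a.b), 𝓕.compl _ a.mem⟩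

@[simp] theorem P.c_s (a : 𝓕.P) : a.c.s = a.sᶜ := rfl
@[simp] theorem P.c_b (a : 𝓕.P) : a.c.b = !a.b := rfl

theorem P.c_c (a : 𝓕.P) : a.c.c = a := by
  apply P.ext' <;> simp

instance : MulAction G 𝓕.P where
  smul g a := ⟨(g • a.s, a.b), 𝓕.inv g _ a.mem⟩
  one_smul a := P.ext' (one_smul G a.s) rfl
  mul_smul g h a := P.ext' (mul_smul g h a.s) rfl

@[simp] theorem P.smul_s (g : G) (a : 𝓕.P) : (g • a).s = g • a.s := rfl
@[simp] theorem P.smul_b (g : G) (a : 𝓕.P) : (g • a).b = a.b := rfl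

theorem P.c_smul (g : G) (a : 𝓕.P) : (g • a).c = g • a.c := by
  apply P.ext'
  · simp [Set.smul_set_compl]
  · simp

instance : PartialOrder 𝓕.P where
  le a b := a.s ⊆ b.s ∧ (a.s = b.s → b.b = true → a.b = true)
  le_refl a := ⟨subset_rfl, fun _ h => h⟩
  le_trans a b d := by
    rintro ⟨h1, h2⟩ ⟨h3, h4⟩
    refine ⟨h1.trans h3, fun h h' => ?_⟩
    have e : b.s = d.s := Set.Subset.antisymm h3 (h ▸ h1)
    exact h2 (h.trans e.symm) (h4 e h')
  le_antisymm a b := by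
    rintro ⟨h1, h2⟩ ⟨h3, h4⟩
    have e := Set.Subset.antisymm h1 h3
    refine P.ext' e ?_
    have h2 := h2 e
    have h4 := h4 e.symm
    cases ha : a.b <;> cases hb : b.b <;> simp_all

theorem P.le_iff (a b : 𝓕.P) :
    a ≤ b ↔ a.s ⊆ b.s ∧ (a.s = b.s → b.b = true → a.b = true) := Iff.rfl

theorem P.c_le {a b : 𝓕.P} (h : a ≤ b) : b.c ≤ a.c := by
  obtain ⟨h1, h2⟩ := h
  refine ⟨Set.compl_subset_compl.2 h1, fun h h' => ?_⟩
  have e : a.s = b.s := (compl_injective h).symm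
  have := h2 e
  simp at h' ⊢
  cases hb : b.b
  · rfl
  · rw [this hb] at h'; exact absurd h' (by simp)

theorem P.smul_le {a b : 𝓕.P} (h : a ≤ b) (g : G) : g • a ≤ g • b := by
  obtain ⟨h1, h2⟩ := h
  exact ⟨Set.smul_set_mono h1, fun h => h2 (smul_left_cancel g h)⟩

theorem P.not_le_c (a : 𝓕.P) : ¬ a ≤ a.c := by
  rintro ⟨h, _⟩
  obtain ⟨x, hx⟩ := 𝓕.ne _ a.mem
  exact h hx hx

theorem P.not_c_le (a : 𝓕.P) : ¬ a.c ≤ a := by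
  have := a.c.not_le_c
  rwa [P.c_c] at this

theorem P.le_total_of_eq {a b : 𝓕.P} (h : a.s = b.s) : a ≤ b ∨ b ≤ a := by
  simp only [P.le_iff, h, subset_rfl, true_and]
  cases a.b <;> cases b.b <;> simp

theorem P.le_of_ne {a b : 𝓕.P} (h : a.s ⊆ b.s) (hn : a.s ≠ b.s) : a ≤ b := ⟨h, fun h' => absurd h' hn⟩

theorem P.nested (a b : 𝓕.P) : a ≤ b ∨ a ≤ b.c ∨ a.c ≤ b ∨ a.c ≤ b.c := by
  have key : ∀ a b : 𝓕.P, a.s ⊆ b.s → a ≤ b ∨ b ≤ a := by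
    intro a b h
    by_cases e : a.s = b.s
    · exact P.le_total_of_eq e
    · exact Or.inl (P.le_of_ne h e)
  have hx := 𝓕.nest _ a.mem _ b.mem
  simp only [Cut.Cross] at hx
  by_cases h1 : (a.s ∩ b.s).Nonempty
  · by_cases h2 : (a.s ∩ b.sᶜ).Nonempty
    · by_cases h3 : (a.sᶜ ∩ b.s).Nonempty
      · have h4 : ¬ (a.sᶜ ∩ b.sᶜ).Nonempty := fun h => hx ⟨h1, h2, h3, h⟩
        rcases key a.c b (by
          intro x hx
          by_contra hc
          exact h4 ⟨x, hx, hc⟩) with h | h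
        · exact Or.inr (Or.inr (Or.inl h))
        · have := P.c_le h; rw [P.c_c] at this; exact Or.inr (Or.inl this)
      · rcases key b a (by
          intro x hx
          by_contra hc
          exact h3 ⟨x, hc, hx⟩) with h | h
        · exact Or.inr (Or.inr (Or.inr (P.c_le h)))
        · exact Or.inl h
    · rcases key a b (by
          intro x hx
          by_contra hc
          exact h2 ⟨x, hx, hc⟩) with h | h
      · exact Or.inl h
      · exact Or.inr (Or.inr (Or.inr (P.c_le h)))
  · rcases key a b.c (by
      intro x hx hc
      exact h1 ⟨x, hx, hc⟩) with h | h
    · exact Or.inr (Or.inl h)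
    · have := P.c_le h; rw [P.c_c] at this; exact Or.inr (Or.inr (Or.inl this))

variable (𝓕)

/-- The vertex of a group element. -/
def base (x : G) : Set 𝓕.P := {a | x ∈ a.s}

theorem base_fin (x y : G) : (𝓕.base x \ 𝓕.base y).Finite := by
  have := (𝓕.fin x y).prod (Set.finite_univ : (Set.univ : Set Bool).Finite)
  refine Set.Finite.of_finite_image (f := fun a : 𝓕.P => (a.s, a.b)) (this.subset ?_) ?_
  · rintro _ ⟨a, ⟨h1, h2⟩, rfl⟩
    exact ⟨⟨a.mem, h1, h2⟩, trivial⟩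
  · intro a _ b _ h
    simp only [Prod.mk.injEq] at h
    exact P.ext' h.1 h.2

/-- The conditions for a set of oriented edges to be a vertex. -/
structure IsV (σ : Set 𝓕.P) : Prop where
  ch : ∀ a : 𝓕.P, a.c ∈ σ ↔ a ∉ σ
  up : ∀ a b : 𝓕.P, a ∈ σ → a ≤ b → b ∈ σ
  fin : (σ \ 𝓕.base 1).Finite

/-- Vertices. -/
def V : Type _ := {σ : Set 𝓕.P // 𝓕.IsV σ}

variable {𝓕}

theorem mem_base_smul (g x : G) (a : 𝓕.P) : g⁻¹ • a ∈ 𝓕.base x ↔ a ∈ 𝓕.base (g * x) := by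
  simp only [base, Set.mem_ofPred_eq, P.smul_s]
  rw [Set.mem_smul_set_iff_inv_smul_mem, inv_inv, smul_eq_mul]

theorem isV_smul (g : G) {σ : Set 𝓕.P} (h : 𝓕.IsV σ) : 𝓕.IsV {b | g⁻¹ • b ∈ σ} := by
  refine ⟨?_, ?_, ?_⟩
  · intro a
    simp only [Set.mem_ofPred_eq]
    rw [← P.c_smul, h.ch]
  · intro a b ha hab
    exact h.up _ _ ha (P.smul_le hab _)
  · refine ((h.fin.image (fun b => g • b)).union (𝓕.base_fin g 1)).subset ?_
    rintro b ⟨hb1, hb2⟩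
    by_cases hg : b ∈ 𝓕.base g
    · exact Or.inr ⟨hg, hb2⟩
    · refine Or.inl ⟨g⁻¹ • b, ⟨hb1, ?_⟩, by simp⟩
      rw [mem_base_smul, mul_one]
      exact hg

instance : MulAction G 𝓕.V where
  smul g σ := ⟨{b | g⁻¹ • b ∈ σ.1}, isV_smul g σ.2⟩
  one_smul σ := Subtype.ext (by
    ext b
    change (1 : G)⁻¹ • b ∈ σ.1 ↔ b ∈ σ.1
    rw [inv_one, one_smul])
  mul_smul g h σ := Subtype.ext (by
    ext b
    change (g * h)⁻¹ • b ∈ σ.1 ↔ h⁻¹ • g⁻¹ • b ∈ σ.1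
    rw [mul_inv_rev, mul_smul])

theorem mem_smul_V (g : G) (σ : 𝓕.V) (b : 𝓕.P) : b ∈ (g • σ).1 ↔ g⁻¹ • b ∈ σ.1 := Iff.rfl

theorem isV_base : 𝓕.IsV (𝓕.base 1) := by
  refine ⟨fun a => Iff.rfl, fun a b ha hab => hab.1 ha, ?_⟩
  rw [sdiff_self]
  exact Set.finite_empty

instance : Nonempty 𝓕.V := ⟨⟨_, isV_base⟩⟩

theorem isV_end (a : 𝓕.P) : 𝓕.IsV {b | a ≤ b ∨ a.c < b} := by
  refine ⟨?_, ?_, ?_⟩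
  · intro b
    simp only [Set.mem_ofPred_eq]
    constructor
    · rintro h1 h2
      rcases h1 with h1 | h1 <;> rcases h2 with h2 | h2
      · have := P.c_le h1
        rw [P.c_c] at this
        exact a.not_le_c (h2.trans this)
      · have := P.c_le h1
        rw [P.c_c] at this
        exact absurd (h2.trans_le this) (lt_irrefl _)
      · have := P.c_le h2
        exact absurd (h1.trans_le this) (lt_irrefl _)
      · have := P.c_le h1.le
        rw [P.c_c, P.c_c] at this
        exact a.not_c_le (h2.le.trans this)
    · intro h
      push Not at h
      obtain ⟨h1, h2⟩ := h
      rcases P.nested a b with h | h | h | h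
      · exact absurd h h1
      · exact Or.inl h
      · rcases h.eq_or_lt with e | e
        · left; rw [← e, P.c_c]
        · exact absurd e h2
      · rcases h.eq_or_lt with e | e
        · have : a = b := by rw [← P.c_c a, e, P.c_c]
          exact absurd this.le h1
        · exact Or.inr e
  · rintro b d (h | h) hbd
    · exact Or.inl (h.trans hbd)
    · exact Or.inr (h.trans_le hbd)
  · obtain ⟨x, hx⟩ := 𝓕.ne _ a.mem
    obtain ⟨y, hy⟩ := 𝓕.ne _ a.c.mem
    refine ((𝓕.base_fin y x).union (𝓕.base_fin x 1)).subset ?_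
    rintro b ⟨hb, hb1⟩
    by_cases hxb : b ∈ 𝓕.base x
    · exact Or.inr ⟨hxb, hb1⟩
    · left
      rcases hb with hb | hb
      · exact absurd (hb.1 hx) hxb
      · exact ⟨hb.le.1 hy, hxb⟩

variable (𝓕) in
/-- The tree action associated with the family. -/
def tree : TreeAct G 𝓕.V 𝓕.P where
  c := P.c
  B a := {σ | a ∈ σ.1}
  c_c := P.c_c
  c_smul := P.c_smul
  mem_c a σ := σ.2.ch a
  mem_smul g a σ := by
    simp only [Set.mem_ofPred_eq, mem_smul_V, inv_smul_smul]
  noinv g a h := by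
    have := congrArg P.b h
    simp at this
  nested a b x y u t := by
    simp only [Set.mem_ofPred_eq]
    intro x1 x2 y1 y2 u1 u2 t1 t2
    rcases P.nested a b with h | h | h | h
    · exact y2 (y.2.up _ _ y1 h)
    · exact (x.2.ch b).1 (x.2.up _ _ x1 h) x2
    · exact t2 (t.2.up _ _ ((t.2.ch a).2 t1) h)
    · exact (u.2.ch b).1 (u.2.up _ _ ((u.2.ch a).2 u1) h) u2
  sep_fin x y := by
    refine (y.2.fin.union (x.2.fin.image P.c)).subset ?_
    rintro b ⟨h1, h2⟩
    by_cases hb : b ∈ 𝓕.base 1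
    · refine Or.inr ⟨b.c, ⟨(x.2.ch b).2 h1, ?_⟩, P.c_c b⟩
      exact fun h => h hb
    · exact Or.inl ⟨h2, hb⟩
  sep x y h := by
    apply Subtype.ext
    ext b
    constructor
    · intro hb
      by_contra hc
      exact h b.c (fun h' => (x.2.ch b).1 h' hb) ((y.2.ch b).2 hc)
    · intro hb
      by_contra hc
      exact h b hc hb
  edge_exists a := by
    refine ⟨⟨_, isV_end a.c⟩, ⟨_, isV_end a⟩, ?_, ?_, ?_⟩
    · rintro (h | h)
      · exact a.not_c_le h
      · rw [P.c_c] at h; exact lt_irrefl _ h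
    · exact Or.inl le_rfl
    · intro b h1 h2
      change (a.c ≤ b ∨ a.c.c < b) ↔ (a ≤ b ∨ a.c < b)
      rw [P.c_c]
      constructor
      · rintro (h | h)
        · exact Or.inr (lt_of_le_of_ne h (Ne.symm h2))
        · exact Or.inl h.le
      · rintro (h | h)
        · exact Or.inr (lt_of_le_of_ne h (Ne.symm h1))
        · exact Or.inl h.le

theorem orbits_fin (r : G → G → Prop) (hc : ∀ x y, Relation.ReflTransGen r x y)
    (hinv : ∀ g x y, r x y → r (g * x) (g * y)) (S : Set G) (hS : S.Finite)
    (hrS : ∀ y, r 1 y → y ∈ S) :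
    ∃ S : Set 𝓕.P, S.Finite ∧ ∀ b : 𝓕.P, ∃ s ∈ S, ∃ g : G, b = g • s := by
  refine ⟨⋃ y ∈ S, (𝓕.base 1 \ 𝓕.base y), hS.biUnion (fun y _ => 𝓕.base_fin 1 y), ?_⟩
  intro b
  obtain ⟨x, hx⟩ := 𝓕.ne _ b.mem
  obtain ⟨y, hy⟩ := 𝓕.ne _ b.c.mem
  obtain ⟨⟨p, q⟩, h1, h2, h3⟩ := Cut.cb_nonempty hc (E := b.s) hx hy
  refine ⟨p⁻¹ • b, ?_, p, by simp⟩
  simp only [Set.mem_iUnion]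
  refine ⟨p⁻¹ * q, hrS _ ?_, ?_, ?_⟩
  · have := hinv p⁻¹ _ _ h1
    simpa using this
  · rw [mem_base_smul, mul_one]; exact h2
  · rw [mem_base_smul, mul_inv_cancel_left]; exact h3

theorem no_stab_aux (σ : 𝓕.V) (g : G) (hg : g • σ = σ) (b : 𝓕.P) (hb : b ∈ σ.1)
    (h1 : ∀ᶠ n : ℕ in Filter.atTop, g ^ n ∈ b.s)
    (h2 : ∀ᶠ n : ℕ in Filter.atTop, (g⁻¹) ^ n ∉ b.s) : False := by
  have hmem : ∀ n : ℕ, g ^ n • b ∈ σ.1 := by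
    intro n
    induction n with
    | zero => simpa using hb
    | succ n ih =>
      rw [← hg, mem_smul_V, pow_succ', mul_smul, inv_smul_smul]
      exact ih
  obtain ⟨N, hN⟩ := Filter.eventually_atTop.1 h2
  have hf : ∀ n : ℕ, g ^ (N + n) • b ∈ σ.1 \ 𝓕.base 1 := by
    intro n
    refine ⟨hmem _, fun h => hN (N + n) (by omega) ?_⟩
    have := (mem_base_smul ((g ^ (N + n))⁻¹) 1 b).1 (by rw [inv_inv]; exact h)
    rw [mul_one, ← inv_pow] at this
    exact this
  have hninj : ¬ Function.Injective (fun n : ℕ => g ^ (N + n) • b) := by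
    intro hinj
    have := Set.infinite_range_of_injective hinj
    exact this (σ.2.fin.subset (by rintro _ ⟨n, rfl⟩; exact hf n))
  obtain ⟨m, hm, hmb⟩ : ∃ m : ℕ, 0 < m ∧ g ^ m • b = b := by
    simp only [Function.Injective] at hninj
    push Not at hninj
    obtain ⟨i, j, hij, hne⟩ := hninj
    wlog hlt : i < j generalizing i j
    · exact this j i hij.symm hne.symm (by omega)
    refine ⟨j - i, by omega, ?_⟩
    have e : g ^ (N + j) = g ^ (N + i) * g ^ (j - i) := by rw [← pow_add]; congr 1; omega
    rw [e, mul_smul] at hij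
    exact (smul_left_cancel _ hij).symm
  have hs : g ^ m • b.s = b.s := congrArg P.s hmb
  have hk : ∀ k : ℕ, (g ^ m) ^ k • b.s = b.s := by
    intro k
    induction k with
    | zero => simp
    | succ k ih => rw [pow_succ', mul_smul, ih, hs]
  have e1 : ∀ k : ℕ, (g ^ (m * k) ∈ b.s ↔ 1 ∈ b.s) := by
    intro k
    rw [pow_mul]
    nth_rewrite 1 [← hk k]
    rw [Set.mem_smul_set_iff_inv_smul_mem, smul_eq_mul, inv_mul_cancel]
  have e2 : ∀ k : ℕ, (g⁻¹ ^ (m * k) ∈ b.s ↔ 1 ∈ b.s) := by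
    intro k
    rw [pow_mul, inv_pow, inv_pow]
    nth_rewrite 2 [← hk k]
    rw [Set.mem_smul_set_iff_inv_smul_mem, smul_eq_mul, mul_one]
  obtain ⟨M, hM⟩ := Filter.eventually_atTop.1 h1
  have i1 : N + M ≤ m * (N + M) := Nat.le_mul_of_pos_left _ hm
  have := hN (m * (N + M)) (by omega)
  rw [e2] at this
  have h3 := hM (m * (N + M)) (by omega)
  rw [e1] at h3
  exact this h3

theorem no_stab (σ : 𝓕.V) (g : G) (hg : g • σ = σ) (A : Set G) (hA : A ∈ 𝓕.E)
    (h1 : ∀ᶠ n : ℕ in Filter.atTop, g ^ n ∈ A)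
    (h2 : ∀ᶠ n : ℕ in Filter.atTop, (g⁻¹) ^ n ∉ A) : False := by
  let b : 𝓕.P := ⟨(A, true), hA⟩
  by_cases hb : b ∈ σ.1
  · exact no_stab_aux σ g hg b hb h1 h2
  · have hb' := (σ.2.ch b).2 hb
    refine no_stab_aux σ g⁻¹ (by rw [inv_smul_eq_iff, hg]) b.c hb' h2 ?_
    rw [inv_inv]
    filter_upwards [h1] with n hn h
    exact h hn

end Fam


namespace AlmInv

variable {G : Type*} [Group G]

/-- The subgroup of elements whose right multiplication almost preserves `E`. -/
def ai (E : Set G) : Subgroup G where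
  carrier := {g | {x | x ∈ E ∧ x * g ∉ E}.Finite ∧ {x | x ∉ E ∧ x * g ∈ E}.Finite}
  one_mem' := by
    constructor
    · convert Set.finite_empty (α := G) using 1
      ext x; simp
    · convert Set.finite_empty (α := G) using 1
      ext x; simp
  mul_mem' := by
    rintro a b ⟨ha, ha'⟩ ⟨hb, hb'⟩
    constructor
    · refine (ha.union (hb.preimage (f := fun x => x * a) (mul_left_injective a).injOn)).subset ?_
      rintro x ⟨h1, h2⟩
      by_cases h : x * a ∈ E
      · right; exact ⟨h, by rwa [mul_assoc]⟩
      · left; exact ⟨h1, h⟩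
    · refine (ha'.union (hb'.preimage (f := fun x => x * a) (mul_left_injective a).injOn)).subset ?_
      rintro x ⟨h1, h2⟩
      by_cases h : x * a ∈ E
      · left; exact ⟨h1, h⟩
      · right; exact ⟨h, by rwa [mul_assoc]⟩
  inv_mem' := by
    rintro a ⟨ha, ha'⟩
    constructor
    · refine (ha'.image (fun x => x * a)).subset ?_
      rintro x ⟨h1, h2⟩
      exact ⟨x * a⁻¹, ⟨h2, by simpa using h1⟩, by simp⟩
    · refine (ha.image (fun x => x * a)).subset ?_
      rintro x ⟨h1, h2⟩
      exact ⟨x * a⁻¹, ⟨h2, by simpa using h1⟩, by simp⟩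

theorem mem_ai {E : Set G} {g : G} :
    g ∈ ai E ↔ {x | x ∈ E ∧ x * g ∉ E}.Finite ∧ {x | x ∉ E ∧ x * g ∈ E}.Finite := Iff.rfl

/-- Along an injective sequence, right multiplication eventually preserves membership. -/
theorem ev_iff {E : Set G} {g : G} (hg : g ∈ ai E) (u : ℕ → G) (hu : Function.Injective u) :
    ∀ᶠ n in Filter.atTop, (u n ∈ E ↔ u n * g ∈ E) := by
  have h1 := (hg.1.preimage (f := u) hu.injOn)
  have h2 := (hg.2.preimage (f := u) hu.injOn)
  have h := (h1.union h2).compl_mem_cofinite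
  rw [Nat.cofinite_eq_atTop] at h
  filter_upwards [h] with n hn
  by_contra hc
  apply hn
  by_cases h : u n ∈ E
  · left; exact ⟨h, fun h' => hc ⟨fun _ => h', fun _ => h⟩⟩
  · right
    refine ⟨h, ?_⟩
    by_contra h'
    exact hc ⟨fun h'' => absurd h'' h, fun h'' => absurd h'' h'⟩

theorem inj_pow {g : G} (hg : ¬ IsOfFinOrder g) (h : G) : Function.Injective (fun n : ℕ => h * g ^ n) := by
  intro a b hab
  exact (injective_pow_iff_not_isOfFinOrder.2 hg) (mul_left_cancel hab)

theorem dich {E : Set G} {g : G} (hg : g ∈ ai E) (hi : ¬ IsOfFinOrder g) (h : G) :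
    (∀ᶠ n : ℕ in Filter.atTop, h * g ^ n ∈ E) ∨ (∀ᶠ n : ℕ in Filter.atTop, h * g ^ n ∉ E) := by
  have := ev_iff hg _ (inj_pow hi h)
  obtain ⟨N, hN⟩ := Filter.eventually_atTop.1 this
  by_cases hh : h * g ^ N ∈ E
  · left
    refine Filter.eventually_atTop.2 ⟨N, fun n hn => ?_⟩
    induction n, hn using Nat.le_induction with
    | base => exact hh
    | succ n hn ih =>
      have := (hN n hn).1 ih
      rwa [mul_assoc, ← pow_succ] at this
  · right
    refine Filter.eventually_atTop.2 ⟨N, fun n hn => ?_⟩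
    induction n, hn using Nat.le_induction with
    | base => exact hh
    | succ n hn ih =>
      intro h'
      apply ih
      apply (hN n hn).2
      rwa [mul_assoc, ← pow_succ]

/-- The Cayley relation. -/
def rel (S : Set G) (x y : G) : Prop := x⁻¹ * y ∈ S

theorem ai_of_cb {S : Set G} (hS : Subgroup.closure S = ⊤) (hsymm : ∀ s ∈ S, s⁻¹ ∈ S) {E : Set G}
    (h : (Cut.cb (rel S) E).Finite) : ai E = ⊤ := by
  rw [eq_top_iff, ← hS, Subgroup.closure_le]
  intro s hs
  constructor
  · refine (h.image Prod.fst).subset ?_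
    rintro x ⟨h1, h2⟩
    exact ⟨(x, x * s), ⟨by simpa [rel] using hs, h1, h2⟩, rfl⟩
  · refine (h.image Prod.snd).subset ?_
    rintro x ⟨h1, h2⟩
    exact ⟨(x * s, x), ⟨by simpa [rel] using hsymm s hs, h2, h1⟩, rfl⟩

theorem cb_of_ai {S : Set G} (hS : S.Finite) {E : Set G} (h : ai E = ⊤) :
    (Cut.cb (rel S) E).Finite := by
  refine (hS.biUnion (t := fun s => (fun x => (x, x * s)) '' {x | x ∈ E ∧ x * s ∉ E}) ?_).subset ?_
  · intro s _
    have : s ∈ ai E := by rw [h]; trivial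
    exact this.1.image _
  · rintro ⟨x, y⟩ ⟨h1, h2, h3⟩
    simp only [Set.mem_iUnion]
    exact ⟨x⁻¹ * y, h1, x, ⟨h2, by simpa using h3⟩, by simp⟩

theorem conn {S : Set G} (hS : Subgroup.closure S = ⊤) (hsymm : ∀ s ∈ S, s⁻¹ ∈ S) (x y : G) :
    Relation.ReflTransGen (rel S) x y := by
  have key : ∀ g ∈ Subgroup.closure S, ∀ x, Relation.ReflTransGen (rel S) x (x * g) := by
    intro g hg
    induction hg using Subgroup.closure_induction with
    | mem s hs => intro x; exact Relation.ReflTransGen.single (by simpa [rel] using hs)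
    | one => intro x; simpa using Relation.ReflTransGen.refl
    | mul a b _ _ iha ihb => intro x; rw [← mul_assoc]; exact (iha x).trans (ihb _)
    | inv a _ iha =>
      intro x
      have := iha (x * a⁻¹)
      rw [inv_mul_cancel_right] at this
      have hs : Std.Symm (rel S) := ⟨fun p q hpq => by
        have := hsymm _ hpq
        simpa [rel] using this⟩
      exact Relation.ReflTransGen.stdSymm.symm _ _ this
  have := key (x⁻¹ * y) (by rw [hS]; trivial) x
  simpa using this

end AlmInv

namespace FreeCut

open FreeGroup

variable {α : Type*} [DecidableEq α]

theorem sw_iff {s : α × Bool} {f : FreeGroup α} : f ∈ startsWith s ↔ f.toWord.head? = some s := by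
  rw [List.head?_eq_getElem?]; rfl

theorem sw_letter (s c : α × Bool) (f : FreeGroup α) (h1 : f ∈ startsWith s)
    (h2 : f * mk [c] ∉ startsWith s) : f = mk [s] := by
  rw [sw_iff] at h1 h2
  have hne : f.toWord ≠ [] := by intro h; rw [h] at h1; simp at h1
  obtain ⟨L, d, hL⟩ : ∃ L d, f.toWord = L ++ [d] :=
    ⟨_, _, (List.dropLast_append_getLast hne).symm⟩
  have hred : IsReduced (L ++ [d]) := hL ▸ isReduced_toWord
  have hf : f = mk (L ++ [d]) := by rw [← hL, mk_toWord]
  by_cases hd : d.1 = c.1 → d.2 = c.2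
  · exfalso
    apply h2
    have hr : IsReduced (L ++ [d] ++ [c]) := by
      refine IsReduced.append_overlap hred ?_ (by simp)
      simpa [FreeGroup.IsReduced] using hd
    rw [hf, mul_mk, toWord_mk, hr.reduce_eq]
    rw [hL] at h1
    cases L <;> simpa using h1
  · push Not at hd
    obtain ⟨hd1, hd2⟩ := hd
    have hc : mk [d] * mk [c] = 1 := by
      obtain ⟨d1, d2⟩ := d
      obtain ⟨c1, c2⟩ := c
      dsimp at hd1 hd2
      subst hd1
      have : c2 = !d2 := by cases c2 <;> cases d2 <;> simp_all
      subst this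
      rw [mul_mk]
      exact Quot.sound Red.Step.cons_not
    have e : f * mk [c] = mk L := by
      rw [hf, ← mul_mk, mul_assoc, hc, mul_one]
    rw [e, toWord_mk, IsReduced.reduce_eq (L := L) (List.IsChain.left_of_append hred)] at h2
    rw [hL] at h1
    rcases L with _ | ⟨a, L⟩
    · simp at h1; rw [hf, h1]; rfl
    · simp at h1 h2; exact absurd h1 h2

theorem ai_sw (s : α × Bool) : AlmInv.ai (startsWith s) = ⊤ := by
  have hl : ∀ c : α × Bool, {x | x ∈ startsWith s ∧ x * mk [c] ∉ startsWith s}.Finite := by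
    intro c
    refine (Set.finite_singleton (mk [s])).subset ?_
    rintro x ⟨h1, h2⟩
    exact sw_letter s c x h1 h2
  have hof : ∀ a : α, FreeGroup.of a ∈ AlmInv.ai (startsWith s) := by
    intro a
    refine ⟨hl (a, true), ?_⟩
    refine ((hl (a, false)).preimage (f := fun x => x * FreeGroup.of a)
      (mul_left_injective _).injOn).subset ?_
    rintro x ⟨h1, h2⟩
    refine ⟨h2, ?_⟩
    have : (mk [(a, false)] : FreeGroup α) = (FreeGroup.of a)⁻¹ := rfl
    show x * of a * mk [(a, false)] ∉ _
    rw [this, mul_inv_cancel_right]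
    exact h1
  rw [eq_top_iff]
  intro x _
  induction x using FreeGroup.induction_on with
  | C1 => exact one_mem _
  | of a => exact hof a
  | inv_of a _ => exact inv_mem (hof a)
  | mul x y hx hy => exact mul_mem (hx trivial) (hy trivial)

theorem axis (f : FreeGroup α) (hf : f ≠ 1) : ∃ (u : FreeGroup α) (s : α × Bool), ∀ n : ℕ,
    u⁻¹ * f ^ (n + 1) * u ∈ startsWith s ∧ u⁻¹ * (f⁻¹) ^ (n + 1) * u ∉ startsWith s := by
  set R := reduceCyclically f.toWord with hR
  set u : FreeGroup α := mk (reduceCyclically.conjugator f.toWord) with hu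
  have hfe : f = u * mk R * u⁻¹ := by
    rw [hu, inv_mk, mul_mk, mul_mk, hR, reduceCyclically.conj_conjugator_reduceCyclically, mk_toWord]
  have hRc : IsCyclicallyReduced R := reduceCyclically.isCyclicallyReduced isReduced_toWord
  have hne : R ≠ [] := by
    intro h
    apply hf
    rw [hfe, h, ← one_eq_mk]; simp
  have hpow : ∀ n : ℕ, (mk R ^ (n + 1) : FreeGroup α).toWord = (List.replicate (n + 1) R).flatten := by
    intro n
    rw [toWord_pow, toWord_mk, hRc.isReduced.reduce_eq, (hRc.flatten_replicate _).isReduced.reduce_eq]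
  refine ⟨u, R.head hne, fun n => ?_⟩
  have e1 : u⁻¹ * f ^ (n + 1) * u = mk R ^ (n + 1) := by
    rw [hfe, conj_pow]; group
  have e2 : u⁻¹ * (f⁻¹) ^ (n + 1) * u = (mk R ^ (n + 1))⁻¹ := by
    rw [← e1]; group
  rw [e1, e2, sw_iff, sw_iff, toWord_inv, hpow]
  constructor
  · rw [List.head?_flatten_replicate (h := by simp)]
    exact List.head?_eq_some_head hne
  · intro h
    rw [invRev, List.head?_reverse, List.getLast?_map,
      List.getLast?_flatten_replicate (h := by simp), List.getLast?_eq_some_getLast hne] at h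
    simp only [Option.map_some, Option.some.injEq] at h
    have := hRc.2 (R.getLast hne) (List.getLast?_eq_some_getLast hne) (R.head hne)
      (List.head?_eq_some_head hne)
    rw [← h] at this
    simp at this

theorem finite_basis {β : Type*} (h : Group.FG (FreeGroup β)) : Finite β := by
  classical
  obtain ⟨S, hS⟩ := Group.fg_def.1 h
  by_contra hinf
  rw [not_finite_iff_infinite] at hinf
  obtain ⟨a, ha⟩ := Infinite.exists_notMem_finset
    (S.biUnion fun x => (x.toWord.map Prod.fst).toFinset)
  let F : FreeGroup β →* Multiplicative ℤ :=
    FreeGroup.lift (fun b => if b = a then Multiplicative.ofAdd 1 else 1)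
  have hF : ∀ x ∈ S, F x = 1 := by
    intro x hx
    rw [← mk_toWord (x := x)]
    rw [FreeGroup.lift_mk]
    apply List.prod_eq_one
    intro z hz
    obtain ⟨⟨b, c⟩, hb, rfl⟩ := List.mem_map.1 hz
    have : b ≠ a := by
      rintro rfl
      apply ha
      simp only [Finset.mem_biUnion, List.mem_toFinset, List.mem_map]
      exact ⟨x, hx, _, hb, rfl⟩
    simp [this]
  have hker : (⊤ : Subgroup (FreeGroup β)) ≤ F.ker := by
    rw [← hS, Subgroup.closure_le]
    exact hF
  have := hker (Subgroup.mem_top (FreeGroup.of a))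
  rw [MonoidHom.mem_ker] at this
  simp [F] at this

end FreeCut


namespace VF

open AlmInv FreeCut
open scoped Pointwise

variable {G : Type*} [Group G]

theorem exists_proj (F : Subgroup G) (hF : F.FiniteIndex) : ∃ (p : G → F) (T : Set G), T.Finite ∧
    (∀ (f : F) x, p (f * x) = f * p x) ∧ ∀ x, ((p x : G))⁻¹ * x ∈ T := by
  let t : G → G := fun x => (Quotient.mk (QuotientGroup.rightRel F) x).out
  have ht : ∀ x, x * (t x)⁻¹ ∈ F := by
    intro x
    have : (QuotientGroup.rightRel F) (t x) x := Quotient.mk_out (s := QuotientGroup.rightRel F) x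
    rwa [QuotientGroup.rightRel_apply] at this
  have hfx : ∀ (f : F) x, t (f * x) = t x := by
    intro f x
    have : Quotient.mk (QuotientGroup.rightRel F) (f * x) = Quotient.mk (QuotientGroup.rightRel F) x := by
      apply Quotient.sound
      show (QuotientGroup.rightRel F) _ _
      rw [QuotientGroup.rightRel_apply]
      simp
    show Quotient.out _ = Quotient.out _
    rw [this]
  have hfin : Finite (Quotient (QuotientGroup.rightRel F)) :=
    Finite.of_equiv _ (QuotientGroup.quotientRightRelEquivQuotientLeftRel F).symm
  refine ⟨fun x => ⟨x * (t x)⁻¹, ht x⟩, Set.range (Quotient.out (s := QuotientGroup.rightRel F)),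
    Set.finite_range _, ?_, ?_⟩
  · intro f x
    apply Subtype.ext
    simp [hfx, mul_assoc]
  · intro x
    exact ⟨Quotient.mk (QuotientGroup.rightRel F) x, by simp [t]⟩

theorem ai_pre {F : Subgroup G} {p : G → F} {T : Set G} (hT : T.Finite)
    (hp : ∀ (f : F) x, p (f * x) = f * p x) (hpT : ∀ x, ((p x : G))⁻¹ * x ∈ T) (D : Set F)
    (hD : ai D = ⊤) : ai (p ⁻¹' D) = ⊤ := by
  rw [eq_top_iff]
  intro g _
  have key : ∀ x g, p (x * g) = p x * p (((p x : G))⁻¹ * x * g) := by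
    intro x g
    rw [← hp]
    congr 1
    group
  constructor
  · refine (hT.biUnion (t := fun t => (fun f : F => (f : G) * t) '' {f | f ∈ D ∧ f * p (t * g) ∉ D})
      ?_).subset ?_
    · intro t _
      have : p (t * g) ∈ ai D := by rw [hD]; trivial
      exact this.1.image _
    · rintro x ⟨h1, h2⟩
      simp only [Set.mem_iUnion]
      refine ⟨_, hpT x, p x, ⟨h1, ?_⟩, by simp⟩
      rw [← key]; exact h2
  · refine (hT.biUnion (t := fun t => (fun f : F => (f : G) * t) '' {f | f ∉ D ∧ f * p (t * g) ∈ D})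
      ?_).subset ?_
    · intro t _
      have : p (t * g) ∈ ai D := by rw [hD]; trivial
      exact this.2.image _
    · rintro x ⟨h1, h2⟩
      simp only [Set.mem_iUnion]
      refine ⟨_, hpT x, p x, ⟨h1, ?_⟩, by simp⟩
      rw [← key]; exact h2

theorem ai_equiv {H : Type*} [Group H] (e : G ≃* H) (D : Set H) (hD : ai D = ⊤) :
    ai (e ⁻¹' D) = ⊤ := by
  rw [eq_top_iff]
  intro g _
  have : e g ∈ ai D := by rw [hD]; trivial
  constructor
  · refine (this.1.preimage (f := e) e.injective.injOn).subset ?_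
    rintro x ⟨h1, h2⟩
    exact ⟨h1, by rw [← map_mul]; exact h2⟩
  · refine (this.2.preimage (f := e) e.injective.injOn).subset ?_
    rintro x ⟨h1, h2⟩
    exact ⟨h1, by rw [← map_mul]; exact h2⟩

/-- Pass from powers of `g ^ j` to powers of `g`. -/
theorem ev_of_pow {E : Set G} (hE : ai E = ⊤) {g : G} (hi : ¬ IsOfFinOrder g) (h v : G) {j : ℕ}
    (hj : 0 < j) (H : ∀ n : ℕ, h * (g ^ j) ^ (n + 1) * v ∈ E) :
    ∀ᶠ n : ℕ in Filter.atTop, h * g ^ n ∈ E := by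
  rcases dich (g := g) (by rw [hE]; trivial) hi h with h' | h'
  · exact h'
  · exfalso
    have hij : ¬ IsOfFinOrder (g ^ j) := by
      rw [isOfFinOrder_pow]; rintro (h | h)
      · exact hi h
      · omega
    have h1 := ev_iff (E := E) (g := v) (by rw [hE]; trivial) _ (inj_pow hij h)
    have h2 : Filter.Tendsto (fun n : ℕ => j * n) Filter.atTop Filter.atTop :=
      Filter.tendsto_id.const_mul_atTop' hj
    have h3 := h2.eventually h'
    obtain ⟨n, hn1, hn2, hn3⟩ := (h1.and (h3.and (Filter.eventually_ge_atTop 1))).exists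
    obtain ⟨m, rfl⟩ : ∃ m, n = m + 1 := ⟨n - 1, by omega⟩
    apply hn2
    rw [pow_mul]
    exact hn1.2 (H m)

theorem ai_compl {E : Set G} (hE : ai E = ⊤) : ai Eᶜ = ⊤ := by
  rw [eq_top_iff]
  intro g _
  have : g ∈ ai E := by rw [hE]; trivial
  refine ⟨?_, ?_⟩
  · simpa using this.2
  · simpa using this.1

/-- A finite list of almost invariant sets, translates of which separate the ends of each
infinite order element. -/
theorem exists_cuts (hfg : Group.FG G) (F : Subgroup G) (hF : F.FiniteIndex)
    (hfree : Nonempty (IsFreeGroup F)) : ∃ 𝓓 : Set (Set G), 𝓓.Finite ∧ (∀ D ∈ 𝓓, ai D = ⊤) ∧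
    ∀ g : G, ¬ IsOfFinOrder g → ∃ D ∈ 𝓓, ∃ u : G,
      (∀ᶠ n : ℕ in Filter.atTop, u * g ^ n ∈ D) ∧ (∀ᶠ n : ℕ in Filter.atTop, u * g⁻¹ ^ n ∉ D) := by
  classical
  obtain ⟨hfree⟩ := hfree
  have hFfg : Group.FG F := by
    have := hfg
    exact Subgroup.fg_of_index_ne_zero F
  let e : F ≃* FreeGroup (IsFreeGroup.Generators F) := IsFreeGroup.toFreeGroup F
  have : Finite (IsFreeGroup.Generators F) :=
    finite_basis (Group.fg_of_surjective (f := e.toMonoidHom) e.surjective)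
  obtain ⟨p, T, hT, hp, hpT⟩ := exists_proj F hF
  let D : IsFreeGroup.Generators F × Bool → Set G := fun s =>
    p ⁻¹' (e ⁻¹' (FreeGroup.startsWith s))
  have hD : ∀ s, ai (D s) = ⊤ := fun s => ai_pre hT hp hpT _ (ai_equiv e _ (ai_sw s))
  refine ⟨Set.range D, Set.finite_range D, ?_, ?_⟩
  · rintro _ ⟨s, rfl⟩; exact hD s
  intro g hg
  obtain ⟨j, hj, hjF⟩ : ∃ j : ℕ, 0 < j ∧ g ^ j ∈ F := by
    obtain ⟨j, hj, _, h⟩ := Subgroup.exists_pow_mem_of_index_ne_zero hF.index_ne_zero g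
    exact ⟨j, hj, h⟩
  have hne : e ⟨g ^ j, hjF⟩ ≠ 1 := by
    intro h
    rw [map_eq_one_iff e e.injective] at h
    apply hg
    rw [isOfFinOrder_iff_pow_eq_one]
    exact ⟨j, hj, congrArg Subtype.val h⟩
  obtain ⟨u, s, hus⟩ := axis _ hne
  refine ⟨D s, ⟨s, rfl⟩, (((e.symm u)⁻¹ : F) : G), ?_, ?_⟩
  · refine ev_of_pow (hD s) hg _ (((e.symm u * (p 1)⁻¹ : F)) : G) hj ?_
    intro n
    have : ((((e.symm u)⁻¹ : F) : G)) * (g ^ j) ^ (n + 1) * (((e.symm u * (p 1)⁻¹ : F)) : G) =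
        (((e.symm u)⁻¹ * ⟨g ^ j, hjF⟩ ^ (n + 1) * (e.symm u * (p 1)⁻¹) : F) : G) * 1 := by
      simp
    rw [this]
    simp only [D, Set.mem_preimage]
    rw [hp]
    have h := (hus n).1
    convert h using 1
    simp [mul_assoc]
    rw [← map_pow]; rfl
  · refine ev_of_pow (E := (D s)ᶜ) (ai_compl (hD s)) (by rwa [isOfFinOrder_inv_iff]) _
      (((e.symm u * (p 1)⁻¹ : F)) : G) hj ?_
    intro n
    have : ((((e.symm u)⁻¹ : F) : G)) * (g⁻¹ ^ j) ^ (n + 1) * (((e.symm u * (p 1)⁻¹ : F)) : G) =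
        (((e.symm u)⁻¹ * (⟨g ^ j, hjF⟩⁻¹) ^ (n + 1) * (e.symm u * (p 1)⁻¹) : F) : G) * 1 := by
      simp
    rw [this]
    simp only [D, Set.mem_preimage, Set.mem_compl_iff]
    rw [hp]
    have h := (hus n).2
    convert h using 2
    simp [mul_assoc]
    rw [← map_pow]; rfl

/-- The pairs of ends. -/
def ends (G : Type*) [Group G] : Set (Filter G × Filter G) :=
  {α | ∃ (h g : G), ¬ IsOfFinOrder g ∧ α = (Filter.map (fun n : ℕ => h * g ^ n) Filter.atTop,
    Filter.map (fun n : ℕ => h * g⁻¹ ^ n) Filter.atTop)}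

theorem rel_left (S : Set G) (k x y : G) :
    rel S (Equiv.mulLeft k x) (Equiv.mulLeft k y) ↔ rel S x y := by
  simp [rel, mul_assoc]

theorem sym_left (S : Set G) (k : G) : Cut.Sym (rel S) (ends G) (Equiv.mulLeft k) := by
  refine ⟨rel_left S k, ?_⟩
  rintro _ ⟨h, g, hg, rfl⟩
  refine ⟨k * h, g, hg, ?_⟩
  simp only [Filter.map_map]
  congr 2 <;> · ext n; simp [mul_assoc]

theorem hyp (hfg : Group.FG G) (F : Subgroup G) (hF : F.FiniteIndex)
    (hfree : Nonempty (IsFreeGroup F)) (S : Set G) (hSf : S.Finite)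
    (hS : Subgroup.closure S = ⊤) (hsymm : ∀ s ∈ S, s⁻¹ ∈ S) :
    ∃ K, Cut.Hyp (rel S) (ends G) K := by
  obtain ⟨𝓓, h1, h2, h3⟩ := exists_cuts hfg F hF hfree
  obtain ⟨K, hK⟩ := (h1.image (fun D => (Cut.cb (rel S) D).ncard)).bddAbove
  refine ⟨K, ⟨?_, conn hS hsymm, ?_, ?_, ?_⟩⟩
  · intro x y h
    simpa [rel] using hsymm _ h
  · rintro _ ⟨h, g, hg, rfl⟩
    exact ⟨inferInstance, inferInstance⟩
  · rintro _ ⟨h, g, hg, rfl⟩ E hE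
    have hE' := ai_of_cb hS hsymm hE
    exact ⟨dich (by rw [hE']; trivial) hg h,
      dich (by rw [hE']; trivial) (by rwa [isOfFinOrder_inv_iff]) h⟩
  · rintro _ ⟨h, g, hg, rfl⟩
    obtain ⟨D, hD, u, h4, h5⟩ := h3 g hg
    refine ⟨Equiv.mulLeft (u * h⁻¹) ⁻¹' D, ⟨?_, Or.inl ⟨?_, ?_⟩⟩, ?_⟩
    · rw [Cut.cb_preimage (rel_left S _)]
      exact (cb_of_ai hSf (h2 D hD)).preimage (Equiv.injective _).injOn
    · show ∀ᶠ n : ℕ in Filter.atTop, _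
      filter_upwards [h4] with n hn
      simpa [mul_assoc] using hn
    · show ∀ᶠ n : ℕ in Filter.atTop, _
      filter_upwards [h5] with n hn
      simpa [mul_assoc] using hn
    · rw [Cut.cb_preimage_ncard (rel_left S _)]
      exact hK ⟨D, hD, rfl⟩

theorem torsionFree {F : Subgroup G} (hfree : Nonempty (IsFreeGroup F)) {g : G} (hgF : g ∈ F)
    (hg : g ≠ 1) : ¬ IsOfFinOrder g := by
  obtain ⟨hfree⟩ := hfree
  intro h
  let e : F ≃* FreeGroup (IsFreeGroup.Generators F) := IsFreeGroup.toFreeGroup F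
  obtain ⟨n, hn, h⟩ := isOfFinOrder_iff_pow_eq_one.1 h
  have h1 : (⟨g, hgF⟩ : F) ^ n = 1 := Subtype.ext (by simpa using h)
  have h2 : (e ⟨g, hgF⟩) ^ n = 1 := by rw [← map_pow, h1, map_one]
  have h3 : e ⟨g, hgF⟩ = 1 := (pow_eq_one_iff_left hn.ne').1 h2
  rw [map_eq_one_iff e e.injective] at h3
  exact hg (congrArg Subtype.val h3)

theorem main (hfg : Group.FG G) (F : Subgroup G) (hF : F.FiniteIndex)
    (hfree : Nonempty (IsFreeGroup F))
    (hco : ∀ ψ : G →* G, Function.Injective ψ → Function.Surjective ψ) (ψ : G →* G)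
    (hψ : ∀ H : Subgroup G, (H : Set G).Finite → ∃ g, ∀ h ∈ H, h = g * ψ h * g⁻¹) :
    Function.Surjective ψ := by
  classical
  obtain ⟨S0, hS0⟩ := Group.fg_def.1 hfg
  let S : Set G := (S0 : Set G) ∪ (S0 : Set G)⁻¹
  have hSf : S.Finite := S0.finite_toSet.union S0.finite_toSet.inv
  have hS : Subgroup.closure S = ⊤ := by
    rw [eq_top_iff, ← hS0]
    exact Subgroup.closure_mono Set.subset_union_left
  have hsymm : ∀ s ∈ S, s⁻¹ ∈ S := by
    rintro s (h | h)
    · right; simpa using h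
    · left; exact h
  obtain ⟨K, hH⟩ := hyp hfg F hF hfree S hSf hS hsymm
  obtain ⟨𝓔, c1, c2, c3, c4, c5, c6⟩ := hH.family
  let 𝓕 : Fam G := ⟨𝓔, c1, c2, c3, c4, by
    intro g A hA
    have := c6 (Equiv.mulLeft g⁻¹) (sym_left S _) (by
      have : (Equiv.mulLeft g⁻¹).symm = Equiv.mulLeft g := by ext; simp
      rw [this]; exact sym_left S _) A hA
    convert this using 1
    ext x
    simp [Set.mem_smul_set_iff_inv_smul_mem]⟩
  have hfin : ∀ x : 𝓕.V, Finite (MulAction.stabilizer G x) := by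
    intro x
    by_contra hinf
    rw [not_finite_iff_infinite] at hinf
    obtain ⟨g, hgs, hgF, hg1⟩ : ∃ g : G, g • x = x ∧ g ∈ F ∧ g ≠ 1 := by
      by_contra hcon
      push Not at hcon
      have : Function.Injective (fun g : MulAction.stabilizer G x => (QuotientGroup.mk (g : G) : G ⧸ F)) := by
        intro a b hab
        have h := QuotientGroup.eq.1 hab
        have := hcon ((a : G)⁻¹ * b) ((MulAction.stabilizer G x).mul_mem
          ((MulAction.stabilizer G x).inv_mem a.2) b.2) h
        exact Subtype.ext (inv_mul_eq_one.1 this)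
      have hq : Finite (G ⧸ F) := inferInstance
      exact not_finite_iff_infinite.2 hinf (Finite.of_injective _ this)
    have hi := torsionFree hfree hgF hg1
    obtain ⟨E, hE, -, hsp⟩ := c5 _ ⟨1, g, hi, rfl⟩
    have conv : ∀ (k : G) (A : Set G), A ∈ Filter.map (fun n : ℕ => 1 * k ^ n) Filter.atTop →
        ∀ᶠ n : ℕ in Filter.atTop, k ^ n ∈ A := by
      intro k A h
      have h' : ∀ᶠ n : ℕ in Filter.atTop, 1 * k ^ n ∈ A := h
      simpa using h'
    rcases hsp with ⟨h1, h2⟩ | ⟨h1, h2⟩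
    · exact 𝓕.no_stab x g hgs E hE (conv _ _ h1) (conv _ _ h2)
    · exact 𝓕.no_stab x g⁻¹ (by rw [inv_smul_eq_iff, hgs]) E hE (conv _ _ h1)
        (by rw [inv_inv]; exact conv _ _ h2)
  refine 𝓕.tree.surj hco (𝓕.orbits_fin (rel S) (conn hS hsymm) ?_ S hSf ?_) hfin ψ ?_
  · intro g x y h
    simpa [rel, mul_assoc] using h
  · intro y h
    simpa [rel] using h
  · intro x
    have := hfin x
    obtain ⟨g, hg⟩ := hψ (MulAction.stabilizer G x) (Set.toFinite _)
    refine ⟨g⁻¹, fun h hh => ?_⟩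
    have := hg h hh
    nth_rewrite 2 [this]
    group

end VF

/-- Every class-permuting endomorphism of a finitely generated co-Hopfian
virtually free group is an automorphism. -/
theorem classPermuting_bijective_of_coHopfian
    (G : Type*) [Group G] (hfg : Group.FG G) (hvf : VirtuallyFree G)
    (hco : CoHopfian G) :
    ∀ φ : G →* G, ClassPermuting φ → Function.Bijective φ := by
  intro φ hφ
  obtain ⟨F, hF, hfree⟩ := hvf
  obtain ⟨n, hn, hE⟩ := hφ
  have hs : Function.Surjective (homPow φ n) :=
    VF.main hfg F hF hfree hco _ (fun H hH => hE H hH)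
  obtain ⟨m, rfl⟩ : ∃ m, n = m + 1 := ⟨n - 1, by omega⟩
  have hsurj : Function.Surjective φ := by
    intro y
    obtain ⟨x, hx⟩ := hs y
    exact ⟨homPow φ m x, hx⟩
  exact ⟨hopfian_of_vf hfg F hF hfree φ hsurj, hsurj⟩
end
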